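/- arXiv:1406.6918 — 2 statements merged into one kernel-verified Lean document; each statement's English description precedes it below -/
import Mathlib

section
/- Let G be a finite group. The triple (S_G(ω;ω), ≤, r) is a topological Ramsey space. -/
open Topology

section Ellentuck

variable {R α : Type*}

/-- The basic set `[a,A] = {B ∈ R : B ≤ A and r_n(B) = a for some n}` of the
Ellentuck topology determined by a quasi-order `le` and approximation
mappings `r`. -/
def EllSet (le : R → R → Prop) (r : ℕ → R → α) (a : α) (A : R) : Set R :=
  {B | le B A ∧ ∃ n, r n B = a}

/-- The Ellentuck topology on `R`, generated by the basic sets `[a,A]`. -/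
def EllTop (le : R → R → Prop) (r : ℕ → R → α) : TopologicalSpace R :=
  TopologicalSpace.generateFrom {s | ∃ a A, s = EllSet le r a A}

/-- A set `S ⊆ R` is Ramsey: for every nonempty `[a,A]` there is `B ∈ [a,A]`
with `[a,B] ⊆ S` or `[a,B] ∩ S = ∅`. -/
def IsRamseySet (le : R → R → Prop) (r : ℕ → R → α) (S : Set R) : Prop :=
  ∀ (a : α) (A : R), (EllSet le r a A).Nonempty →
    ∃ B ∈ EllSet le r a A, EllSet le r a B ⊆ S ∨ EllSet le r a B ∩ S = ∅

/-- A set `S ⊆ R` is Ramsey null: for every nonempty `[a,A]` there is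
`B ∈ [a,A]` with `[a,B] ∩ S = ∅`. -/
def IsRamseyNullSet (le : R → R → Prop) (r : ℕ → R → α) (S : Set R) : Prop :=
  ∀ (a : α) (A : R), (EllSet le r a A).Nonempty →
    ∃ B ∈ EllSet le r a A, EllSet le r a B ∩ S = ∅

/-- A set has the property of Baire with respect to a topology `t`: it is the
symmetric difference of a `t`-open set and a `t`-meager set. -/
def HasPropertyOfBaire (t : TopologicalSpace R) (S : Set R) : Prop :=
  ∃ U M : Set R, IsOpen[t] U ∧ @IsMeagre R t M ∧ S = symmDiff U M

/-- `(R, ≤, r)` is a topological Ramsey space: every subset of `R` with the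
property of Baire in the Ellentuck topology is Ramsey, and every
Ellentuck-meager subset is Ramsey null. -/
def IsTopRamseySpace (le : R → R → Prop) (r : ℕ → R → α) : Prop :=
  (∀ S : Set R, HasPropertyOfBaire (EllTop le r) S → IsRamseySet le r S) ∧
  (∀ S : Set R, @IsMeagre R (EllTop le r) S → IsRamseyNullSet le r S)

end Ellentuck

/-- The space `S_G(ω;ω)` of partial `G`-partitions of `ω` into `ω` blocks:
maps `A : ω → {ν} ∪ (ω × G)` (with `ν` encoded as `none`) such that each
block `j` first occurs with group element `e`, and the first occurrences of
the blocks are increasing. -/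
def SG (G : Type) [Group G] : Set (ℕ → Option (ℕ × G)) :=
  {A | (∀ j : ℕ, ∃ i, A i = some (j, 1) ∧ ∀ i' < i, ∀ g : G, A i' ≠ some (j, g)) ∧
       ∀ j j' : ℕ, j < j' →
         ∃ i, A i = some (j, (1 : G)) ∧ ∀ i', A i' = some (j', (1 : G)) → i < i'}

/-- The space `S_G(ω;k)` of partial `G`-partitions of `ω` into `k` blocks. -/
def SGK (G : Type) [Group G] (k : ℕ) : Set (ℕ → Option (ℕ × G)) :=
  {A | (∀ i j g, A i = some (j, g) → j < k) ∧
       (∀ j < k, ∃ i, A i = some (j, (1 : G)) ∧ ∀ i' < i, ∀ g : G, A i' ≠ some (j, g)) ∧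
       ∀ j j' : ℕ, j < j' → j' < k →
         ∃ i, A i = some (j, (1 : G)) ∧ ∀ i', A i' = some (j', (1 : G)) → i < i'}

/-- The composition `A·B` of partial `G`-partitions. -/
def compG {G : Type} [Group G] (A B : ℕ → Option (ℕ × G)) : ℕ → Option (ℕ × G) :=
  fun i => match A i with
    | none => none
    | some (j, b) => match B j with
      | none => none
      | some (k, c) => some (k, b * c)

/-- The approximation map: `r(0,A) = ∅` and, for `n > 0`, `r(n,A)` is the
restriction of `A` to the initial segment below `min A^{-1}({(n,e)})`. -/
noncomputable def rG {G : Type} [Group G] (n : ℕ) (A : ℕ → Option (ℕ × G)) :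
    List (Option (ℕ × G)) :=
  if n = 0 then [] else
    List.ofFn fun i : Fin (sInf {i | A i = some (n, (1 : G))}) => A i

/-!
Composition makes `S_G(ω;ω)` a monoid in which `A ≤ B` says that `B` divides `A`, and the basic
sets `[r_n(B), B]` are the translates `B * F` of the submonoids `F = fix G m` of those
elements that fix the first `m` letters. For a monoid with such a decreasing sequence of submonoids
Ellentuck's theorem follows by combinatorial forcing: since only finitely many beginnings exist at
each stage, a suitable infinite product decides, for all its multiples and all `m` at once, whether
a translate is contained in a given set or has no refinement contained in it. A pigeonhole
principle then carries rejection from `m` to `m + 1`, so that a rejected translate misses every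
open set in question.

For partial `G`-partitions the pigeonhole principle is the Carlson–Simpson theorem on left variable
words, proved with ultrafilters on words: if `w` generates a minimal left ideal of ultrafilters on
constant words and `p` concentrates on left variable words, then an idempotent of the form `p * w`
is left unchanged by multiplication with each of its substitution instances, and the words are
chosen along it one after the other.
-/

/-! ### Ellentuck's theorem for filtered monoids -/
section Filtration

variable {M : Type*} [Monoid M]

/-- A set that meets every right translate `b * N` and is stable under right multiplication by
the submonoid `N`: the counterpart of a dense open set of forcing conditions. -/
structure DenseHereditary (N : Submonoid M) (P : Set M) : Prop where
  mul_mem : ∀ b ∈ P, ∀ c ∈ N, b * c ∈ P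
  dense : ∀ b, ∃ c ∈ N, b * c ∈ P

theorem DenseHereditary.biInter {N : Submonoid M} {ι : Type*} {s : Set ι} (hs : s.Finite)
    {P : ι → Set M} (h : ∀ i ∈ s, DenseHereditary N (P i)) :
    DenseHereditary N (⋂ i ∈ s, P i) where
  mul_mem b hb c hc := Set.mem_iInter₂.2 fun i hi =>
    (h i hi).mul_mem b (Set.mem_iInter₂.1 hb i hi) c hc
  dense b := by
    induction s, hs using Set.Finite.induction_on with
    | empty => exact ⟨1, one_mem N, by simp⟩
    | @insert i s _ _ ih =>
      obtain ⟨c, hc, hcs⟩ := ih fun j hj => h j (Set.mem_insert_of_mem i hj)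
      obtain ⟨d, hd, hdi⟩ := (h i (Set.mem_insert i s)).dense (b * c)
      refine ⟨c * d, N.mul_mem hc hd, ?_⟩
      rw [Set.biInter_insert, ← mul_assoc]
      exact ⟨hdi, Set.mem_iInter₂.2 fun j hj =>
        (h j (Set.mem_insert_of_mem i hj)).mul_mem _ (Set.mem_iInter₂.1 hcs j hj) d hd⟩

/-- The translate `a * F n` is contained in `U`. -/
def Accepts (F : ℕ → Submonoid M) (U : Set M) (a : M) (n : ℕ) : Prop :=
  ∀ c ∈ F n, a * c ∈ U

/-- No refinement `a * c * F n`, with `c ∈ F n`, of the translate `a * F n` is contained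
in `U`. -/
def Rejects (F : ℕ → Submonoid M) (U : Set M) (a : M) (n : ℕ) : Prop :=
  ∀ c ∈ F n, ¬ Accepts F U (a * c) n

/-- Every translate `a * F n` has a refinement contained in `S` or disjoint from `S`. -/
def IsCompletelyRamsey (F : ℕ → Submonoid M) (S : Set M) : Prop :=
  ∀ a n, ∃ d ∈ F n, Accepts F S (a * d) n ∨ Accepts F Sᶜ (a * d) n

/-- Every translate `a * F n` has a refinement disjoint from `S`. -/
def IsCompletelyRamseyNull (F : ℕ → Submonoid M) (S : Set M) : Prop :=
  ∀ a n, ∃ d ∈ F n, Accepts F Sᶜ (a * d) n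

/-- The properties of a decreasing sequence of submonoids `F` under which the topology generated
by the translates `a * F n` satisfies Ellentuck's theorem. The elements of `T n k` represent the
finitely many ways in which an element can begin up to position `k` when `n` blocks have been
seen; multiplication by them exchanges `F n` and `F k`. -/
structure RamseyFiltration (F : ℕ → Submonoid M) (T : ℕ → ℕ → Set M) : Prop where
  antitone : Antitone F
  fusion : ∀ P : ℕ → M, (∀ n, ∃ t ∈ F n, P (n + 1) = P n * t) → ∃ d, ∀ n, ∃ t ∈ F n, d = P n * t
  finite : ∀ n k, (T n k).Finite
  push : ∀ n k, ∀ E ∈ T n k, ∀ d ∈ F n, ∃ d' ∈ F k, d' * E = E * d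
  pull : ∀ n k, ∀ E ∈ T n k, ∀ d ∈ F k, ∃ d' ∈ F n, d * E = E * d'
  cover : ∀ c n, ∃ k ≥ n, ∃ E ∈ T n k, ∃ d ∈ F n, c = E * d
  pigeonhole : ∀ n (V : Set M), (∀ c ∈ F n, ∀ x ∈ F (n + 1), (c * x ∈ V ↔ c ∈ V)) →
    ∃ d ∈ F n, Accepts F V d n ∨ Accepts F Vᶜ d n

variable {F : ℕ → Submonoid M} {U : Set M} {a : M} {n : ℕ}

theorem Accepts.mul (h : Accepts F U a n) {c : M} (hc : c ∈ F n) : Accepts F U (a * c) n :=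
  fun d hd => mul_assoc a c d ▸ h _ (mul_mem hc hd)

theorem Rejects.mul (h : Rejects F U a n) {c : M} (hc : c ∈ F n) : Rejects F U (a * c) n :=
  fun d hd => mul_assoc a c d ▸ h _ (mul_mem hc hd)

theorem Accepts.mem (h : Accepts F U a n) : a ∈ U := by
  simpa only [mul_one] using h 1 (one_mem _)

theorem Rejects.not_accepts (h : Rejects F U a n) : ¬ Accepts F U a n := by
  simpa only [mul_one] using h 1 (one_mem _)

theorem Accepts.mono_right (hF : Antitone F) (h : Accepts F U a n) {m : ℕ} (hnm : n ≤ m) :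
    Accepts F U a m :=
  fun c hc => h c (hF hnm hc)

theorem exists_eq_mul_of_le (hF : Antitone F)
    {P : ℕ → M} (hP : ∀ n, ∃ t ∈ F n, P (n + 1) = P n * t) {N : ℕ} (h : n ≤ N) :
    ∃ q ∈ F n, P N = P n * q := by
  induction N, h using Nat.le_induction with
  | base => exact ⟨1, Submonoid.one_mem _, (mul_one _).symm⟩
  | succ N hN ih =>
    obtain ⟨q, hq, hPq⟩ := ih
    obtain ⟨t, ht, hPt⟩ := hP N
    exact ⟨q * t, mul_mem hq (hF hN ht), by rw [hPt, hPq, mul_assoc]⟩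

theorem denseHereditary_accepts_or_rejects (F : ℕ → Submonoid M) (U : Set M) (n : ℕ) :
    DenseHereditary (F n) {b | Accepts F U b n ∨ Rejects F U b n} where
  mul_mem _ hb _ hc := hb.imp (·.mul hc) (·.mul hc)
  dense b := by
    by_cases h : ∃ c ∈ F n, Accepts F U (b * c) n
    · obtain ⟨c, hc, h⟩ := h
      exact ⟨c, hc, Or.inl h⟩
    · push Not at h
      exact ⟨1, one_mem _, Or.inr (by rwa [mul_one])⟩

theorem IsCompletelyRamseyNull.denseHereditary {S : Set M} (hS : IsCompletelyRamseyNull F S)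
    (n : ℕ) : DenseHereditary (F n) {b | Accepts F Sᶜ b n} where
  mul_mem _ hb _ hc := hb.mul hc
  dense b := hS b n

theorem IsCompletelyRamsey.symmDiff {S N : Set M} (hS : IsCompletelyRamsey F S)
    (hN : IsCompletelyRamseyNull F N) : IsCompletelyRamsey F (symmDiff S N) := by
  intro a n
  obtain ⟨d, hd, hdN⟩ := hN a n
  obtain ⟨e, he, heS⟩ := hS (a * d) n
  have hN' : Accepts F Nᶜ (a * d * e) n := hdN.mul he
  rw [mul_assoc] at heS hN'
  refine ⟨d * e, mul_mem hd he, heS.imp (fun h c hc => Or.inl ⟨h c hc, hN' c hc⟩) ?_⟩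
  rintro h c hc (⟨hcS, -⟩ | ⟨hcN, -⟩)
  · exact h c hc hcS
  · exact hN' c hc hcN

namespace RamseyFiltration

variable {T : ℕ → ℕ → Set M}

theorem denseHereditary_preimage (hF : RamseyFiltration F T) {k : ℕ} {E : M} (hE : E ∈ T n k)
    {P : Set M} (hP : DenseHereditary (F n) P) : DenseHereditary (F k) {b | b * E ∈ P} where
  mul_mem b hb c hc := by
    obtain ⟨c', hc', h⟩ := hF.pull n k E hE c hc
    rw [Set.mem_ofPred_eq, mul_assoc, h, ← mul_assoc]
    exact hP.mul_mem _ hb c' hc'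
  dense b := by
    obtain ⟨e, he, h⟩ := hP.dense (b * E)
    obtain ⟨d, hd, hde⟩ := hF.push n k E hE e he
    exact ⟨d, hd, by rwa [Set.mem_ofPred_eq, mul_assoc, hde, ← mul_assoc]⟩

-- The `k`-th factor of the infinite product handles all beginnings `E ∈ T n k` at once.
theorem exists_forall_mem (hF : RamseyFiltration F T) {P : ℕ → Set M} {n₀ : ℕ}
    (hP : ∀ n ≥ n₀, DenseHereditary (F n) (P n)) (a : M) :
    ∃ d ∈ F n₀, ∀ c, ∀ n ≥ n₀, a * d * c ∈ P n := by
  have hstep (k : ℕ) (b : M) : ∃ c, (c ∈ F k ∧ c ∈ F n₀) ∧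
      ∀ n ≥ n₀, n ≤ k → ∀ E ∈ T n k, a * (b * c) * E ∈ P n := by
    rcases lt_or_ge k n₀ with hk | hk
    · exact ⟨1, ⟨one_mem _, one_mem _⟩, fun n hn hnk => absurd (hn.trans hnk) hk.not_ge⟩
    have hQ : DenseHereditary (F k) (⋂ n ∈ Set.Icc n₀ k, ⋂ E ∈ T n k, {b | b * E ∈ P n}) :=
      .biInter (Set.finite_Icc n₀ k) fun n hn => .biInter (hF.finite n k) fun E hE =>
        hF.denseHereditary_preimage hE (hP n hn.1)
    obtain ⟨c, hc, h⟩ := hQ.dense (a * b)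
    simp only [Set.mem_iInter, mul_assoc a b] at h
    exact ⟨c, ⟨hc, hF.antitone hk hc⟩, fun n hn hnk E hE => h n ⟨hn, hnk⟩ E hE⟩
  choose s hsmem hs using hstep
  let p : ℕ → M := fun k => Nat.rec 1 (fun k b => b * s k b) k
  have hp (k : ℕ) : p (k + 1) = p k * s k (p k) := rfl
  have hp_mem (k : ℕ) : p k ∈ F n₀ := by
    induction k with
    | zero => exact one_mem _
    | succ k ih => exact mul_mem ih (hsmem k _).2
  obtain ⟨d, hd⟩ := hF.fusion p fun k => ⟨_, (hsmem k _).1, hp k⟩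
  refine ⟨d, ?_, fun c n hn => ?_⟩
  · obtain ⟨t, ht, rfl⟩ := hd n₀
    exact mul_mem (hp_mem n₀) ht
  · obtain ⟨k, hk, E, hE, e, he, rfl⟩ := hF.cover c n
    obtain ⟨t, ht, rfl⟩ := hd (k + 1)
    obtain ⟨t', ht', htE⟩ := hF.pull n k E hE t (hF.antitone k.le_succ ht)
    have hmem := (hP n hn).mul_mem _ (hs k (p k) n hn hk E hE) (t' * e) (mul_mem ht' he)
    have hassoc : a * (p (k + 1) * t) * (E * e) = a * p (k + 1) * (t * E) * e := by
      simp only [mul_assoc]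
    rw [hassoc, htE]
    simpa only [hp, mul_assoc] using hmem

theorem exists_rejects_succ (hF : RamseyFiltration F T) {n₀ : ℕ}
    (ha : ∀ c, ∀ n ≥ n₀, Accepts F U (a * c) n ∨ Rejects F U (a * c) n) :
    ∃ d ∈ F n₀, ∀ c, ∀ n ≥ n₀, Rejects F U (a * (d * c)) n → Rejects F U (a * (d * c)) (n + 1) := by
  have hP : ∀ n ≥ n₀, DenseHereditary (F n)
      {b | Accepts F U (a * b) n ∨ ∀ y ∈ F n, Rejects F U (a * (b * y)) (n + 1)} := by
    refine fun n hn => ⟨fun b hb c hc => hb.imp (fun h => mul_assoc a b c ▸ h.mul hc)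
      fun h y hy => mul_assoc b c y ▸ h _ (mul_mem hc hy), fun b => ?_⟩
    have hdec (y : M) := ha (b * y) (n + 1) (by lia)
    have hinv : ∀ c ∈ F n, ∀ x ∈ F (n + 1),
        (c * x ∈ {y | Accepts F U (a * (b * y)) (n + 1)} ↔
          c ∈ {y | Accepts F U (a * (b * y)) (n + 1)}) := by
      intro c _ x hx
      have hassoc : a * (b * (c * x)) = a * (b * c) * x := by simp only [mul_assoc]
      simp only [Set.mem_ofPred_eq, hassoc]
      exact ⟨fun h => (hdec c).resolve_right fun hrej => hrej x hx h, fun h => h.mul hx⟩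
    obtain ⟨d, hd, h⟩ := hF.pigeonhole n _ hinv
    refine ⟨d, hd, h.imp (fun h c hc => ?_) fun h y hy => ?_⟩
    · simpa only [mul_assoc] using (h c hc).mem
    · rw [mul_assoc b]
      exact (hdec _).resolve_left (h y hy)
  obtain ⟨d, hd, h⟩ := hF.exists_forall_mem hP 1
  refine ⟨d, hd, fun c n hn hrej => ?_⟩
  have h := (one_mul d ▸ h c n hn).resolve_left hrej.not_accepts 1 (one_mem _)
  rwa [mul_one] at h

theorem isCompletelyRamsey (hF : RamseyFiltration F T) (hU : ∀ a ∈ U, ∃ n, Accepts F U a n) :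
    IsCompletelyRamsey F U := by
  intro a n
  obtain ⟨d, hd, hdec⟩ := hF.exists_forall_mem (n₀ := n)
    (fun m _ => denseHereditary_accepts_or_rejects F U m) a
  obtain ⟨e, he, hsucc⟩ := hF.exists_rejects_succ hdec
  refine ⟨d * e, mul_mem hd he, ?_⟩
  rw [← mul_assoc]
  refine (hdec e n le_rfl).imp_right fun hrej c hc hcU => ?_
  have hall : ∀ m ≥ n, Rejects F U (a * d * (e * c)) m := by
    intro m hm
    induction m, hm using Nat.le_induction with
    | base => exact mul_assoc (a * d) e c ▸ hrej.mul hc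
    | succ m hm ih => exact hsucc c m hm ih
  rw [mul_assoc] at hcU
  obtain ⟨m, hm⟩ := hU _ hcU
  exact (hall (max m n) (le_max_right m n)).not_accepts
    (hm.mono_right hF.antitone (le_max_left m n))

section Topology

variable [TopologicalSpace M]

theorem isCompletelyRamseyNull_compl (hF : RamseyFiltration F T)
    (hopen : ∀ U : Set M, IsOpen U ↔ ∀ a ∈ U, ∃ n, Accepts F U a n)
    (hU : IsOpen U) (hd : Dense U) : IsCompletelyRamseyNull F Uᶜ := by
  intro a n
  obtain ⟨d, hd', h | h⟩ := hF.isCompletelyRamsey ((hopen U).1 hU) a n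
  · exact ⟨d, hd', by rwa [compl_compl]⟩
  have htranslate : IsOpen {x | ∃ c ∈ F n, x = a * d * c} := by
    rw [hopen]
    rintro _ ⟨c, hc, rfl⟩
    exact ⟨n, fun x hx => ⟨c * x, mul_mem hc hx, mul_assoc _ _ _⟩⟩
  obtain ⟨_, ⟨c, hc, rfl⟩, hxU⟩ :=
    hd.inter_open_nonempty _ htranslate ⟨_, 1, one_mem _, rfl⟩
  exact absurd hxU (h c hc)

theorem isCompletelyRamseyNull_of_isMeagre (hF : RamseyFiltration F T)
    (hopen : ∀ U : Set M, IsOpen U ↔ ∀ a ∈ U, ∃ n, Accepts F U a n) {S : Set M}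
    (hS : IsMeagre S) : IsCompletelyRamseyNull F S := by
  obtain ⟨𝒰, h𝒰o, h𝒰d, h𝒰c, hsub⟩ := mem_residual_iff.1 hS
  obtain ⟨u, hu⟩ := (h𝒰c.insert Set.univ).exists_eq_range (Set.insert_nonempty _ _)
  have hnull (i : ℕ) : IsCompletelyRamseyNull F (u i)ᶜ := by
    have hi : u i ∈ insert Set.univ 𝒰 := hu ▸ Set.mem_range_self i
    rcases hi with hi | hi
    · exact hF.isCompletelyRamseyNull_compl hopen (hi ▸ isOpen_univ) (hi ▸ dense_univ)
    · exact hF.isCompletelyRamseyNull_compl hopen (h𝒰o _ hi) (h𝒰d _ hi)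
  intro a n
  obtain ⟨d, hd, h⟩ := hF.exists_forall_mem (n₀ := n) (fun m _ =>
    .biInter (Set.finite_Iic m) fun i _ => (hnull i).denseHereditary m) a
  refine ⟨d, hd, fun c _ => hsub fun V hV => ?_⟩
  obtain ⟨i, rfl⟩ : V ∈ Set.range u := hu ▸ Set.mem_insert_of_mem _ hV
  have hi := Set.mem_iInter₂.1 (h c (max i n) (le_max_right i n)) i (le_max_left i n)
  exact compl_compl (u i) ▸ hi.mem

end Topology

end RamseyFiltration

/-- `r n b` determines, among the right multiples of `b`, exactly the translate
`b * F (level n)`. -/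
structure IsApproximation {α : Type*} (F : ℕ → Submonoid M) (level : ℕ → ℕ)
    (r : ℕ → M → α) : Prop where
  index_eq : ∀ m n a b, r m a = r n b → m = n
  mul_eq_iff : ∀ n b c, r n (b * c) = r n b ↔ c ∈ F (level n)
  le_level : ∀ n, n ≤ level n

namespace IsApproximation

variable {α : Type*} {level : ℕ → ℕ} {r : ℕ → M → α}

theorem mem_ellSet_iff (hr : IsApproximation F level r) {x b : M} :
    x ∈ EllSet (fun a b => b ∣ a) r (r n b) b ↔ ∃ c ∈ F (level n), x = b * c := by
  constructor
  · rintro ⟨⟨c, rfl⟩, m, hm⟩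
    obtain rfl := hr.index_eq m n _ _ hm
    exact ⟨c, (hr.mul_eq_iff m b c).1 hm, rfl⟩
  · rintro ⟨c, hc, rfl⟩
    exact ⟨⟨c, rfl⟩, n, (hr.mul_eq_iff n b c).2 hc⟩

theorem accepts_iff_ellSet_subset (hr : IsApproximation F level r) {S : Set M} {b : M} :
    Accepts F S b (level n) ↔ EllSet (fun a b => b ∣ a) r (r n b) b ⊆ S := by
  constructor
  · intro h x hx
    obtain ⟨c, hc, rfl⟩ := hr.mem_ellSet_iff.1 hx
    exact h c hc
  · exact fun h c hc => h (hr.mem_ellSet_iff.2 ⟨c, hc, rfl⟩)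

theorem isOpen_ellTop_iff (hr : IsApproximation F level r) (hF : Antitone F) (U : Set M) :
    IsOpen[EllTop (fun a b : M => b ∣ a) r] U ↔ ∀ a ∈ U, ∃ n, Accepts F U a n := by
  constructor
  · intro hU
    induction hU with
    | basic s hs =>
      obtain ⟨x, b, rfl⟩ := hs
      rintro _ ⟨⟨c, rfl⟩, n, rfl⟩
      exact ⟨level n, fun d hd => ⟨⟨c * d, mul_assoc _ _ _⟩, n, (hr.mul_eq_iff _ _ _).2 hd⟩⟩
    | univ => exact fun a _ => ⟨0, fun c _ => trivial⟩
    | inter s t _ _ hs ht =>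
      rintro a ⟨has, hat⟩
      obtain ⟨m, hm⟩ := hs a has
      obtain ⟨n, hn⟩ := ht a hat
      exact ⟨max m n, fun c hc => ⟨hm.mono_right hF (le_max_left m n) c hc,
        hn.mono_right hF (le_max_right m n) c hc⟩⟩
    | sUnion 𝒮 _ h =>
      rintro a ⟨s, hs, has⟩
      obtain ⟨n, hn⟩ := h s hs a has
      exact ⟨n, fun c hc => ⟨s, hs, hn c hc⟩⟩
  · intro hU
    let _ := EllTop (fun a b : M => b ∣ a) r
    refine isOpen_iff_mem_nhds.2 fun b hb => ?_
    obtain ⟨n, hn⟩ := hU b hb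
    refine mem_nhds_iff.2 ⟨EllSet (fun a b => b ∣ a) r (r n b) b,
      hr.accepts_iff_ellSet_subset.1 (hn.mono_right hF (hr.le_level n)),
      TopologicalSpace.isOpen_generateFrom_of_mem ⟨_, _, rfl⟩, dvd_rfl, n, rfl⟩

theorem isRamseySet (hr : IsApproximation F level r) {S : Set M} (hS : IsCompletelyRamsey F S) :
    IsRamseySet (fun a b => b ∣ a) r S := by
  rintro _ A ⟨X, hXA, n, rfl⟩
  obtain ⟨d, hd, h⟩ := hS X (level n)
  have hXd := (hr.mul_eq_iff n X d).2 hd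
  refine ⟨X * d, ⟨dvd_mul_of_dvd_left hXA d, n, hXd⟩, ?_⟩
  rwa [← Set.disjoint_iff_inter_eq_empty, ← Set.subset_compl_iff_disjoint_right, ← hXd,
    ← hr.accepts_iff_ellSet_subset, ← hr.accepts_iff_ellSet_subset]

theorem isRamseyNullSet (hr : IsApproximation F level r) {S : Set M}
    (hS : IsCompletelyRamseyNull F S) : IsRamseyNullSet (fun a b => b ∣ a) r S := by
  rintro _ A ⟨X, hXA, n, rfl⟩
  obtain ⟨d, hd, h⟩ := hS X (level n)
  have hXd := (hr.mul_eq_iff n X d).2 hd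
  refine ⟨X * d, ⟨dvd_mul_of_dvd_left hXA d, n, hXd⟩, ?_⟩
  rwa [← Set.disjoint_iff_inter_eq_empty, ← Set.subset_compl_iff_disjoint_right, ← hXd,
    ← hr.accepts_iff_ellSet_subset]

theorem isTopRamseySpace (hr : IsApproximation F level r) {T : ℕ → ℕ → Set M}
    (hF : RamseyFiltration F T) : IsTopRamseySpace (fun a b : M => b ∣ a) r := by
  let _ := EllTop (fun a b : M => b ∣ a) r
  have hopen := hr.isOpen_ellTop_iff hF.antitone
  constructor
  · rintro _ ⟨U, N, hU, hN, rfl⟩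
    exact hr.isRamseySet ((hF.isCompletelyRamsey ((hopen U).1 hU)).symmDiff
      (hF.isCompletelyRamseyNull_of_isMeagre hopen hN))
  · exact fun S hS => hr.isRamseyNullSet (hF.isCompletelyRamseyNull_of_isMeagre hopen hS)

end IsApproximation

end Filtration

/-! ### The Carlson–Simpson theorem -/

section CarlsonSimpson

attribute [local instance] Ultrafilter.semigroup

theorem ultrafilter_map_mul {S T : Type*} [Monoid S] [Monoid T] (f : S →* T)
    (p q : Ultrafilter S) : (p * q).map f = p.map f * q.map f := by
  ext s
  change (∀ᶠ x in ((p * q : Ultrafilter S) : Filter S), f x ∈ s) ↔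
    ∀ᶠ x in ((p.map f * q.map f : Ultrafilter T) : Filter T), x ∈ s
  simp only [Ultrafilter.eventually_mul, Ultrafilter.coe_map, Filter.eventually_map, map_mul]

-- Any element of a minimal closed left ideal works.
theorem exists_forall_exists_mul_eq {S : Type*} [Semigroup S] [TopologicalSpace S] [CompactSpace S]
    [T2Space S] [Nonempty S] (hcont : ∀ r : S, Continuous (· * r)) :
    ∃ w : S, ∀ a : S, ∃ b : S, b * (a * w) = w := by
  let 𝒞 : Set (Set S) := {N | IsClosed N ∧ N.Nonempty ∧ ∀ a, ∀ x ∈ N, a * x ∈ N}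
  have hchain : ∀ c ⊆ 𝒞, IsChain (· ⊆ ·) c → c.Nonempty → ⋂₀ c ∈ 𝒞 := by
    intro c hc hchain hne
    have := hne.to_subtype
    refine ⟨isClosed_sInter fun s hs => (hc hs).1, ?_, fun a x hx s hs => (hc hs).2.2 a x (hx s hs)⟩
    exact IsCompact.nonempty_sInter_of_directed_nonempty_isCompact_isClosed
      (fun s hs t ht => (hchain.total hs ht).elim (fun h => ⟨s, hs, subset_rfl, h⟩)
        fun h => ⟨t, ht, h, subset_rfl⟩) (fun s hs => (hc hs).2.1)
      (fun s hs => (hc hs).1.isCompact) fun s hs => (hc hs).1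
  obtain ⟨N, -, hN⟩ := zorn_superset_nonempty 𝒞
    (fun c hc hch hne => ⟨_, hchain c hc hch hne, fun s hs => Set.sInter_subset_of_mem hs⟩)
    Set.univ ⟨isClosed_univ, Set.univ_nonempty, fun _ _ _ => trivial⟩
  obtain ⟨w, hw⟩ := hN.prop.2.1
  refine ⟨w, fun a => ?_⟩
  have hideal : Set.range (· * (a * w)) ∈ 𝒞 := by
    refine ⟨(isCompact_range (hcont _)).isClosed, Set.range_nonempty _, ?_⟩
    rintro b _ ⟨x, rfl⟩
    exact ⟨b * x, mul_assoc _ _ _⟩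
  have hsub : Set.range (· * (a * w)) ⊆ N := by
    rintro _ ⟨x, rfl⟩
    exact hN.prop.2.2 x _ (hN.prop.2.2 a w hw)
  exact hN.le_of_le hideal hsub hw

variable {L : Type*}

/-- Substitution of the letter `l` for the variable, which is encoded as `none`. -/
def substVar (l : L) : FreeMonoid (Option L) →* FreeMonoid L :=
  FreeMonoid.map fun o => o.getD l

/-- The word obtained from `w` by appending the first `m` of the variable words `y`, with
the letters `l` substituted for the variables. -/
def substWord (w : FreeMonoid L) (y : ℕ → FreeMonoid (Option L)) (l : ℕ → L) : ℕ → FreeMonoid L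
  | 0 => w
  | m + 1 => substWord w y l m * substVar (l m) (y m)

/-- A left variable word: a word that begins with the variable. -/
def IsLeftVariable (y : FreeMonoid (Option L)) : Prop :=
  FreeMonoid.of none ∣ y

theorem IsLeftVariable.map {L' : Type*} {y : FreeMonoid (Option L)} (hy : IsLeftVariable y)
    (f : L → L') : IsLeftVariable (FreeMonoid.map (Option.map f) y) :=
  map_dvd (FreeMonoid.map (Option.map f)) hy

theorem substVar_map_some (l : L) (x : FreeMonoid L) :
    substVar l (FreeMonoid.map some x) = x := by
  simp [substVar, FreeMonoid.map_map]

theorem map_substVar {L' : Type*} (f : L → L') (l : L) (y : FreeMonoid (Option L)) :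
    FreeMonoid.map f (substVar l y) = substVar (f l) (FreeMonoid.map (Option.map f) y) := by
  simp only [substVar, FreeMonoid.map_map]
  congr 2
  ext o
  cases o <;> rfl

theorem map_substWord {L' : Type*} (f : L → L') (w : FreeMonoid L)
    (y : ℕ → FreeMonoid (Option L)) (l : ℕ → L) (m : ℕ) :
    FreeMonoid.map f (substWord w y l m) =
      substWord (FreeMonoid.map f w) (fun i => FreeMonoid.map (Option.map f) (y i)) (f ∘ l) m := by
  induction m with
  | zero => rfl
  | succ m ih => simp only [substWord, map_mul, ih, map_substVar, Function.comp_apply]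

theorem substWord_congr {w : FreeMonoid L} {y : ℕ → FreeMonoid (Option L)} {l l' : ℕ → L} {m : ℕ}
    (h : ∀ i < m, l i = l' i) : substWord w y l m = substWord w y l' m := by
  induction m with
  | zero => rfl
  | succ m ih => rw [substWord, substWord, ih fun i hi => h i (by lia), h m (by lia)]

theorem mem_substWord {w : FreeMonoid L} {y : ℕ → FreeMonoid (Option L)} {l : ℕ → L} {m : ℕ} {a : L}
    (h : a ∈ substWord w y l m) : a ∈ w ∨ ∃ i, some a ∈ y i ∨ i < m ∧ a = l i := by
  induction m with
  | zero => exact Or.inl h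
  | succ m ih =>
    rcases FreeMonoid.mem_mul.1 h with h | h
    · exact (ih h).imp_right fun ⟨i, hi⟩ => ⟨i, hi.imp_right fun hi => ⟨by lia, hi.2⟩⟩
    · obtain ⟨_ | b, hb, rfl⟩ := FreeMonoid.mem_map.1 h
      · exact Or.inr ⟨m, Or.inr ⟨m.lt_succ_self, rfl⟩⟩
      · exact Or.inr ⟨m, Or.inl hb⟩

theorem setOf_isLeftVariable_mem_mul {p : Ultrafilter (FreeMonoid (Option L))}
    (hp : {y | IsLeftVariable y} ∈ p) (r : Ultrafilter (FreeMonoid (Option L))) :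
    {y | IsLeftVariable y} ∈ p * r := by
  change ∀ᶠ x in ((p * r : Ultrafilter _) : Filter (FreeMonoid (Option L))), IsLeftVariable x
  rw [Ultrafilter.eventually_mul]
  filter_upwards [hp] with x hx
  exact Filter.Eventually.of_forall fun z => dvd_mul_of_dvd_left hx z

-- `q` is an idempotent in `p * w`, where `w` generates a minimal left ideal of constant words;
-- minimality makes `w` absorb every substitution instance of `q`.
theorem exists_ultrafilter_mul_map_substVar :
    ∃ q : Ultrafilter (FreeMonoid (Option L)), {y | IsLeftVariable y} ∈ q ∧
      ∀ l : L, q * (q.map (substVar l)).map (FreeMonoid.map some) = q := by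
  obtain ⟨w, hw⟩ := exists_forall_exists_mul_eq (S := Ultrafilter (FreeMonoid L))
    Ultrafilter.continuous_mul_left
  let ι : FreeMonoid L →* FreeMonoid (Option L) := FreeMonoid.map some
  have hι (l : L) (p : Ultrafilter (FreeMonoid L)) : (p.map ι).map (substVar l) = p := by
    rw [Ultrafilter.map_map, show substVar l ∘ ι = id from funext (substVar_map_some l),
      Ultrafilter.map_id]
  let K : Set (Ultrafilter (FreeMonoid (Option L))) :=
    (· * w.map ι) '' {p | {y | IsLeftVariable y} ∈ p}
  have hK : IsCompact K :=
    (ultrafilter_isClosed_basic _).isCompact.image (Ultrafilter.continuous_mul_left _)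
  obtain ⟨q, ⟨p, hp, hpq⟩, hidem⟩ := exists_idempotent_in_compact_subsemigroup
    Ultrafilter.continuous_mul_left K
    ⟨_, pure (FreeMonoid.of none), dvd_refl (FreeMonoid.of (none : Option L)), rfl⟩ hK (by
      rintro _ ⟨p, hp, rfl⟩ _ ⟨p', -, rfl⟩
      exact ⟨p * w.map ι * p', setOf_isLeftVariable_mem_mul
        (setOf_isLeftVariable_mem_mul hp _) _, mul_assoc _ _ _⟩)
  change p * w.map ι = q at hpq
  refine ⟨q, hpq ▸ setOf_isLeftVariable_mem_mul hp _, fun l => ?_⟩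
  have hsubst : p.map (substVar l) * w = q.map (substVar l) := by
    rw [← hpq, ultrafilter_map_mul, hι]
  have habsorb : w * q.map (substVar l) = w := by
    obtain ⟨b, hb⟩ := hw (p.map (substVar l))
    rw [hsubst] at hb
    rw [← hb, mul_assoc, ← ultrafilter_map_mul, hidem]
  calc q * (q.map (substVar l)).map ι = p * (w.map ι * (q.map (substVar l)).map ι) := by
        rw [← mul_assoc, hpq]
    _ = q := by rw [← ultrafilter_map_mul, habsorb, hpq]

theorem eventually_eventually_mul_map_substVar {q : Ultrafilter (FreeMonoid (Option L))} {l : L}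
    (hq : q * (q.map (substVar l)).map (FreeMonoid.map some) = q)
    {s : FreeMonoid (Option L) → Prop} (hs : ∀ᶠ y in (q : Filter _), s y) :
    ∀ᶠ y in (q : Filter _), ∀ᶠ z in (q : Filter _),
      s (y * FreeMonoid.map some (substVar l z)) := by
  rw [← hq] at hs
  simpa only [Ultrafilter.eventually_mul, Ultrafilter.coe_map, Filter.eventually_map] using hs

theorem exists_seq_substWord_mem [Finite L] {B : Set (FreeMonoid L)}
    {Q : FreeMonoid (Option L) → Prop}
    (hB : ∀ s ⊆ B, s.Finite → ∃ y, Q y ∧ ∀ x ∈ s, ∀ l, x * substVar l y ∈ B)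
    {w : FreeMonoid L} (hw : w ∈ B) :
    ∃ y : ℕ → FreeMonoid (Option L), (∀ m, Q (y m)) ∧ ∀ l m, substWord w y l m ∈ B := by
  choose! c hcQ hc using hB
  let next (s : Set (FreeMonoid L)) : Set (FreeMonoid L) :=
    Set.image2 (fun x l => x * substVar l (c s)) s Set.univ
  let s (n : ℕ) : Set (FreeMonoid L) := next^[n] {w}
  have hs (n : ℕ) : s (n + 1) = next (s n) := Function.iterate_succ_apply' _ _ _
  have hsB (n : ℕ) : s n ⊆ B ∧ (s n).Finite := by
    induction n with
    | zero => exact ⟨Set.singleton_subset_iff.2 hw, Set.finite_singleton w⟩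
    | succ n ih =>
      rw [hs]
      exact ⟨Set.image2_subset_iff.2 fun x hx l _ => hc _ ih.1 ih.2 x hx l,
        ih.2.image2 _ Set.finite_univ⟩
  refine ⟨fun m => c (s m), fun m => hcQ _ (hsB m).1 (hsB m).2, fun l m => (hsB m).1 ?_⟩
  induction m with
  | zero => exact Set.mem_singleton w
  | succ m ih => exact hs m ▸ Set.mem_image2_of_mem ih (Set.mem_univ (l m))

theorem exists_substWord_mem_of_eventually [Finite L]
    {q : Ultrafilter (FreeMonoid (Option L))} (hLV : {y | IsLeftVariable y} ∈ q)
    (hq : ∀ l : L, q * (q.map (substVar l)).map (FreeMonoid.map some) = q)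
    {B : Set (FreeMonoid L)} {l₀ : L} (hB : ∀ᶠ y in (q : Filter _), substVar l₀ y ∈ B) :
    ∃ (w : FreeMonoid L) (y : ℕ → FreeMonoid (Option L)),
      (∀ m, IsLeftVariable (y m)) ∧ ∀ l m, substWord w y l m ∈ B := by
  let B' : Set (FreeMonoid L) := {x ∈ B | ∀ l, ∀ᶠ y in (q : Filter _), x * substVar l y ∈ B}
  have hB' : ∀ᶠ y in (q : Filter _), substVar l₀ y ∈ B' := by
    refine hB.and (Filter.eventually_all.2 fun l => ?_)
    simpa only [map_mul, substVar_map_some] using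
      eventually_eventually_mul_map_substVar (hq l) hB
  have hstep : ∀ x ∈ B', ∀ l, ∀ᶠ y in (q : Filter _), x * substVar l y ∈ B' := by
    intro x hx l
    refine (hx.2 l).and (Filter.eventually_all.2 fun l' => ?_)
    simpa only [map_mul, substVar_map_some, mul_assoc] using
      eventually_eventually_mul_map_substVar (hq l') (hx.2 l)
  have hchoice : ∀ s ⊆ B', s.Finite → ∃ y, IsLeftVariable y ∧
      ∀ x ∈ s, ∀ l, x * substVar l y ∈ B' := fun s hsB hs =>
    (Filter.Eventually.and hLV ((Filter.eventually_all_finite hs).2 fun x hx =>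
      Filter.eventually_all.2 (hstep x (hsB hx)))).exists
  obtain ⟨y₀, hy₀⟩ := hB'.exists
  obtain ⟨y, hy, hmem⟩ := exists_seq_substWord_mem hchoice hy₀
  exact ⟨_, y, hy, fun l m => (hmem l m).1⟩

theorem carlson_simpson [Finite L] [Nonempty L] (A : Set (FreeMonoid L)) :
    ∃ (w : FreeMonoid L) (y : ℕ → FreeMonoid (Option L)), (∀ m, IsLeftVariable (y m)) ∧
      ((∀ l m, substWord w y l m ∈ A) ∨ ∀ l m, substWord w y l m ∈ Aᶜ) := by
  obtain ⟨q, hLV, hq⟩ := exists_ultrafilter_mul_map_substVar (L := L)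
  let l₀ : L := Classical.arbitrary L
  rcases Ultrafilter.em q fun y => substVar l₀ y ∈ A with h | h
  · obtain ⟨w, y, hy, hA⟩ := exists_substWord_mem_of_eventually hLV hq h
    exact ⟨w, y, hy, Or.inl hA⟩
  · obtain ⟨w, y, hy, hA⟩ := exists_substWord_mem_of_eventually (B := Aᶜ) hLV hq h
    exact ⟨w, y, hy, Or.inr hA⟩

end CarlsonSimpson

theorem exists_forall_eq_map_range {α : Type*} {u : ℕ → List α}
    (hu : ∀ m, u m <+: u (m + 1)) (hlen : ∀ m, m ≤ (u m).length) :
    ∃ f : ℕ → α, ∀ m, u m = (List.range (u m).length).map f := by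
  have hprefix {m k : ℕ} (h : m ≤ k) : u m <+: u k := by
    induction k, h using Nat.le_induction with
    | base => exact List.prefix_rfl
    | succ k _ ih => exact ih.trans (hu k)
  refine ⟨fun i => (u (i + 1))[i]'(hlen (i + 1)), fun m => ?_⟩
  refine List.ext_getElem (by simp) fun i hi _ => ?_
  simp only [List.getElem_map, List.getElem_range]
  rw [(hprefix (le_max_left m (i + 1))).getElem hi,
    (hprefix (le_max_right m (i + 1))).getElem]

/-! ### The monoid of partial `G`-partitions -/

section PartialPartitions

namespace SG

/-- The letters `ν` and `(j, g)` with `j < n`, the only ones that occur in a partial `G`-partition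
before the first occurrence of the block `n`. -/
def lowLetters (G : Type) (n : ℕ) : Set (Option (ℕ × G)) :=
  {o | ∀ j g, o = some (j, g) → j < n}

theorem finite_lowLetters {G : Type} [Finite G] (n : ℕ) : (lowLetters G n).Finite := by
  refine (((Set.finite_Iio n).prod (Set.finite_univ (α := G))).image some |>.insert none).subset ?_
  rintro (_ | ⟨j, g⟩) h
  · exact Set.mem_insert _ _
  · exact Set.mem_insert_of_mem _ ⟨(j, g), ⟨h j g rfl, trivial⟩, rfl⟩

variable {G : Type} [Group G]

/-- The value of the letter `o` after the blocks have been replaced according to `B`, so that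
`(A·B)(i) = letterAct B (A i)`. -/
def letterAct (B : ℕ → Option (ℕ × G)) (o : Option (ℕ × G)) : Option (ℕ × G) :=
  o.bind fun p => (B p.1).map fun q => (q.1, p.2 * q.2)

theorem compG_apply (A B : ℕ → Option (ℕ × G)) (i : ℕ) : compG A B i = letterAct B (A i) := by
  unfold compG letterAct
  rcases A i with _ | ⟨j, b⟩
  · rfl
  · rcases h : B j with _ | ⟨k, c⟩ <;> simp [h]

@[simp] theorem letterAct_none (B : ℕ → Option (ℕ × G)) : letterAct B none = none := rfl

@[simp] theorem letterAct_some_one (B : ℕ → Option (ℕ × G)) (j : ℕ) :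
    letterAct B (some (j, 1)) = B j := by
  simp [letterAct]

theorem exists_of_letterAct_eq_some {B : ℕ → Option (ℕ × G)} {o : Option (ℕ × G)} {k : ℕ} {g : G}
    (h : letterAct B o = some (k, g)) : ∃ j b c, o = some (j, b) ∧ B j = some (k, c) := by
  rcases o with _ | ⟨j, b⟩
  · simp at h
  · simp only [letterAct, Option.bind_some, Option.map_eq_some_iff] at h
    obtain ⟨⟨k', c⟩, hB, hk⟩ := h
    obtain ⟨rfl, -⟩ := Prod.mk.inj hk
    exact ⟨j, b, c, rfl, hB⟩

theorem letterAct_congr {B B' : ℕ → Option (ℕ × G)} {o : Option (ℕ × G)}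
    (h : ∀ j g, o = some (j, g) → B j = B' j) : letterAct B o = letterAct B' o := by
  rcases o with _ | ⟨j, b⟩
  · rfl
  · simp [letterAct, h j b rfl]

theorem letterAct_eq_self {B : ℕ → Option (ℕ × G)} {o : Option (ℕ × G)}
    (h : ∀ j g, o = some (j, g) → B j = some (j, 1)) : letterAct B o = o := by
  rcases o with _ | ⟨j, b⟩
  · rfl
  · simp [letterAct, h j b rfl]

theorem letterAct_letterAct (A B : ℕ → Option (ℕ × G)) (o : Option (ℕ × G)) :
    letterAct B (letterAct A o) = letterAct (compG A B) o := by
  rcases o with _ | ⟨j, b⟩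
  · rfl
  · simp only [letterAct, Option.bind_some, compG_apply]
    rcases A j with _ | ⟨k, c⟩
    · rfl
    · rcases h : B k with _ | ⟨l, d⟩ <;> simp [h, mul_assoc]

theorem exists_strictMono_of_mem {A : ℕ → Option (ℕ × G)} (hA : A ∈ SG G) :
    ∃ m : ℕ → ℕ, StrictMono m ∧ (∀ j, A (m j) = some (j, 1)) ∧
      ∀ i j g, A i = some (j, g) → m j ≤ i := by
  obtain ⟨hblock, hmin⟩ := hA
  choose m hm hlt using hblock
  refine ⟨m, fun j j' hj => ?_, hm, fun i j g h => not_lt.1 fun hi => hlt j i hi g h⟩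
  obtain ⟨i, hi, hi'⟩ := hmin j j' hj
  exact (not_lt.1 fun h => hlt j i h 1 hi).trans_lt (hi' _ (hm j'))

theorem mem_of_monotone {A : ℕ → Option (ℕ × G)} {m : ℕ → ℕ} (hm : Monotone m)
    (hA : ∀ j, A (m j) = some (j, 1)) (hle : ∀ i j g, A i = some (j, g) → m j ≤ i) :
    A ∈ SG G := by
  have hinj : Function.Injective m := fun j j' h => by
    have hj := hA j
    rw [h, hA j'] at hj
    simpa using hj.symm
  refine ⟨fun j => ⟨m j, hA j, fun i hi g h => (hle i j g h).not_gt hi⟩, fun j j' hj => ?_⟩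
  exact ⟨m j, hA j, fun i hi => (hm.strictMono_of_injective hinj hj).trans_le (hle i j' 1 hi)⟩

theorem one_mem : (fun i => some (i, 1)) ∈ SG G :=
  mem_of_monotone monotone_id (fun _ => rfl) fun i j g h => by
    simp only [Option.some.injEq, Prod.mk.injEq] at h
    exact h.1.ge

theorem compG_mem {A B : ℕ → Option (ℕ × G)} (hA : A ∈ SG G) (hB : B ∈ SG G) :
    compG A B ∈ SG G := by
  obtain ⟨a, ha, ha1, hale⟩ := exists_strictMono_of_mem hA
  obtain ⟨b, hb, hb1, hble⟩ := exists_strictMono_of_mem hB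
  refine mem_of_monotone (ha.comp hb).monotone (fun j => ?_) fun i k g h => ?_
  · simp [compG_apply, ha1, hb1]
  · rw [compG_apply] at h
    obtain ⟨j, x, y, hx, hy⟩ := exists_of_letterAct_eq_some h
    exact (ha.monotone (hble _ _ _ hy)).trans (hale _ _ _ hx)

instance : Monoid ↥(SG G) where
  mul A B := ⟨compG A.1 B.1, compG_mem A.2 B.2⟩
  one := ⟨fun i => some (i, 1), one_mem⟩
  mul_assoc A B C := Subtype.ext <| funext fun i => by
    change compG (compG A.1 B.1) C.1 i = compG A.1 (compG B.1 C.1) i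
    rw [compG_apply, compG_apply, compG_apply, letterAct_letterAct]
  one_mul A := Subtype.ext <| funext fun i => by
    change compG (fun i => some (i, 1)) A.1 i = A.1 i
    rw [compG_apply, letterAct_some_one]
  mul_one A := Subtype.ext <| funext fun i => by
    change compG A.1 (fun i => some (i, 1)) i = A.1 i
    rw [compG_apply]
    exact letterAct_eq_self fun _ _ _ => rfl

theorem refines_eq_dvd :
    (fun A B : ↥(SG G) => ∃ C ∈ SG G, A.val = compG B.val C) = fun A B => B ∣ A := by
  funext A B
  refine propext ⟨?_, ?_⟩
  · rintro ⟨C, hC, h⟩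
    exact ⟨⟨C, hC⟩, Subtype.ext h⟩
  · rintro ⟨C, rfl⟩
    exact ⟨C.1, C.2, rfl⟩

theorem mul_apply (A B : ↥(SG G)) (i : ℕ) : (A * B).1 i = letterAct B.1 (A.1 i) :=
  compG_apply _ _ _

theorem ext {A B : ↥(SG G)} (h : ∀ i, A.1 i = B.1 i) : A = B :=
  Subtype.ext (funext h)

/-- The position at which the block `j` of `A` first occurs. -/
noncomputable def first (A : ↥(SG G)) : ℕ → ℕ :=
  (exists_strictMono_of_mem A.2).choose

theorem first_strictMono (A : ↥(SG G)) : StrictMono (first A) :=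
  (exists_strictMono_of_mem A.2).choose_spec.1

theorem apply_first (A : ↥(SG G)) (j : ℕ) : A.1 (first A j) = some (j, 1) :=
  (exists_strictMono_of_mem A.2).choose_spec.2.1 j

theorem first_le {A : ↥(SG G)} {i j : ℕ} {g : G} (h : A.1 i = some (j, g)) : first A j ≤ i :=
  (exists_strictMono_of_mem A.2).choose_spec.2.2 i j g h

theorem le_first (A : ↥(SG G)) (j : ℕ) : j ≤ first A j :=
  (first_strictMono A).le_apply

theorem lt_of_lt_first {A : ↥(SG G)} {i j n : ℕ} {g : G} (hi : i < first A n)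
    (h : A.1 i = some (j, g)) : j < n :=
  (first_strictMono A).lt_iff_lt.1 ((first_le h).trans_lt hi)

theorem first_mul (A B : ↥(SG G)) (j : ℕ) : first (A * B) j = first A (first B j) := by
  apply le_antisymm
  · apply first_le (g := 1)
    rw [mul_apply, apply_first, letterAct_some_one, apply_first]
  · have h := apply_first (A * B) j
    rw [mul_apply] at h
    obtain ⟨l, x, y, hx, hy⟩ := exists_of_letterAct_eq_some h
    exact ((first_strictMono A).monotone (first_le hy)).trans (first_le hx)

theorem mul_apply_first (A B : ↥(SG G)) (j : ℕ) : (A * B).1 (first A j) = B.1 j := by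
  rw [mul_apply, apply_first, letterAct_some_one]

variable (G) in
/-- The submonoid of partial `G`-partitions whose first `n` letters are `0, …, n - 1`. -/
def fix (n : ℕ) : Submonoid ↥(SG G) where
  carrier := {C | ∀ i < n, C.1 i = some (i, 1)}
  one_mem' _ _ := rfl
  mul_mem' {A B} hA hB i hi := by
    rw [mul_apply, hA i hi, letterAct_some_one, hB i hi]

theorem fix_antitone : Antitone (fix G) := fun _ _ h _ hC i hi => hC i (hi.trans_le h)

theorem first_of_mem_fix {n : ℕ} {C : ↥(SG G)} (hC : C ∈ fix G n) {j : ℕ} (hj : j < n) :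
    first C j = j :=
  le_antisymm (first_le (hC j hj)) (le_first C j)

theorem mem_fix_succ_iff {n : ℕ} {C : ↥(SG G)} : C ∈ fix G (n + 1) ↔ first C n = n := by
  refine ⟨fun hC => first_of_mem_fix hC n.lt_succ_self, fun h i hi => ?_⟩
  have hadd : first C i + (n - i) ≤ first C (i + (n - i)) := by
    simpa only [add_comm] using (first_strictMono C).add_le_nat (n - i) i
  rw [Nat.add_sub_of_le (Nat.lt_succ_iff.1 hi), h] at hadd
  have hfirst : first C i = i := le_antisymm (by lia) (le_first C i)
  simpa only [hfirst] using apply_first C i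

theorem mul_apply_of_lt_first {A C : ↥(SG G)} {n i : ℕ} (hC : C ∈ fix G n) (hi : i < first A n) :
    (A * C).1 i = A.1 i := by
  rw [mul_apply]
  exact letterAct_eq_self fun j g h => hC j (lt_of_lt_first hi h)

theorem exists_mem_fix_of_tail {n : ℕ} {f : ℕ → Option (ℕ × G)} {m : ℕ → ℕ} (hm : Monotone m)
    (hf : ∀ j, f (m j) = some (n + j, 1)) (hle : ∀ i j g, f i = some (n + j, g) → m j ≤ i) :
    ∃ D ∈ fix G n, (∀ i, D.1 (n + i) = f i) ∧ ∀ j, first D (n + j) = n + m j := by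
  have hmem : (fun i => if i < n then some (i, 1) else f (i - n)) ∈ SG G := by
    refine mem_of_monotone (m := fun j => if j < n then j else n + m (j - n)) ?_ ?_ ?_
    · intro i j hij
      have := hm (Nat.sub_le_sub_right hij n)
      dsimp only
      split_ifs <;> lia
    · intro j
      rcases lt_or_ge j n with hj | hj
      · simp [hj]
      · obtain ⟨j, rfl⟩ := Nat.exists_eq_add_of_le hj
        simp [hf]
    · intro i j g h
      split_ifs at h with hi
      · simp only [Option.some.injEq, Prod.mk.injEq] at h
        split_ifs <;> lia
      · split_ifs with hj
        · lia
        · obtain ⟨j, rfl⟩ := Nat.exists_eq_add_of_le (not_lt.1 hj)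
          have := hle _ _ _ h
          rw [Nat.add_sub_cancel_left]
          lia
  let D : ↥(SG G) := ⟨_, hmem⟩
  have hDf (i : ℕ) : D.1 (n + i) = f i := by simp [D]
  refine ⟨D, fun i hi => if_pos hi, hDf, fun j => ?_⟩
  refine le_antisymm (first_le ((hDf _).trans (hf j))) ?_
  obtain ⟨i, hi⟩ := Nat.exists_eq_add_of_le ((Nat.le_add_right n j).trans (le_first D (n + j)))
  have := hle i j 1 (by rw [← hDf, ← hi, apply_first])
  lia

/-! ### Infinite products -/

theorem mem_of_forall_exists_agree {f : ℕ → Option (ℕ × G)}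
    (h : ∀ j, ∃ A : ↥(SG G), ∀ i ≤ first A j, f i = A.1 i) : f ∈ SG G := by
  choose A hA using h
  have hle (i j : ℕ) (g : G) (hi : f i = some (j, g)) : first (A j) j ≤ i := by
    by_contra! hlt
    exact hlt.not_ge (first_le (hA j i hlt.le ▸ hi))
  refine mem_of_monotone (m := fun j => first (A j) j) (fun j k hjk => ?_)
    (fun j => hA j _ le_rfl ▸ apply_first (A j) j) hle
  have hjk' : first (A k) j ≤ first (A k) k := (first_strictMono (A k)).monotone hjk
  exact (hle _ j 1 (hA k _ hjk' ▸ apply_first (A k) j)).trans hjk'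

theorem exists_first_lt {P : ℕ → ↥(SG G)} (hP : ∀ n, ∃ t ∈ fix G n, P (n + 1) = P n * t)
    (n j : ℕ) : ∃ N ≥ n, first (P N) j < N := by
  let N := max n (max (j + 1) (first (P (j + 1)) j + 1))
  obtain ⟨q, hq, hPq⟩ := exists_eq_mul_of_le fix_antitone hP (show j + 1 ≤ N by lia)
  refine ⟨N, le_max_left _ _, ?_⟩
  rw [hPq, first_mul, first_of_mem_fix hq j.lt_succ_self]
  lia

theorem fusion {P : ℕ → ↥(SG G)} (hP : ∀ n, ∃ t ∈ fix G n, P (n + 1) = P n * t) :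
    ∃ D, ∀ n, ∃ t ∈ fix G n, D = P n * t := by
  let f : ℕ → Option (ℕ × G) := fun i => (P (i + 1)).1 i
  have hf {N i : ℕ} (hi : i < N) : f i = (P N).1 i := by
    obtain ⟨q, hq, h⟩ := exists_eq_mul_of_le fix_antitone hP (Nat.succ_le_of_lt hi)
    rw [h]
    exact (mul_apply_of_lt_first hq (i.lt_succ_self.trans_le (le_first _ _))).symm
  have hfmem : f ∈ SG G := mem_of_forall_exists_agree fun j => by
    obtain ⟨N, -, hN⟩ := exists_first_lt hP 0 j
    exact ⟨P N, fun i hi => hf (hi.trans_lt hN)⟩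
  refine ⟨⟨f, hfmem⟩, fun n => ?_⟩
  let s : ℕ → Option (ℕ × G) := fun j => f (first (P n) j)
  have hs {N j : ℕ} {q : ↥(SG G)} (hq : P N = P n * q) (hj : first (P n) j < N) :
      s j = q.1 j := by
    rw [← mul_apply_first (P n), ← hq]
    exact hf hj
  have hsmem : s ∈ SG G := mem_of_forall_exists_agree fun j => by
    obtain ⟨N, hnN, hN⟩ := exists_first_lt hP n j
    obtain ⟨q, -, hq⟩ := exists_eq_mul_of_le fix_antitone hP hnN
    rw [hq, first_mul] at hN
    exact ⟨q, fun i hi => hs hq (((first_strictMono _).monotone hi).trans_lt hN)⟩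
  refine ⟨⟨s, hsmem⟩, fun i hi => ?_, ext fun i => ?_⟩
  · obtain ⟨q, hqn, hq⟩ := exists_eq_mul_of_le fix_antitone hP
      (le_max_left n (first (P n) i + 1))
    exact (hs hq (by lia)).trans (hqn i hi)
  · obtain ⟨q, -, hq⟩ := exists_eq_mul_of_le fix_antitone hP (le_max_left n (i + 1))
    rw [mul_apply]
    change f i = letterAct s _
    rw [hf (show i < max n (i + 1) by lia), hq, mul_apply]
    exact letterAct_congr fun j g h => (hs hq (by have := first_le h; lia)).symm

/-! ### Exchanging `fix n` and `fix k` -/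

/-- After its beginning, of length `first E n`, the partial `G`-partition `E` lists the blocks
`n, n + 1, …` in order, each exactly once. -/
def IsStandardFrom (n : ℕ) (E : ↥(SG G)) : Prop :=
  ∀ i, E.1 (first E n + i) = some (n + i, 1)

theorem IsStandardFrom.first_add {n : ℕ} {E : ↥(SG G)} (hE : IsStandardFrom n E) (j : ℕ) :
    first E (n + j) = first E n + j :=
  le_antisymm (first_le (hE j)) (by
    simpa only [add_comm] using (first_strictMono E).add_le_nat j n)

theorem IsStandardFrom.exists_eq_mul {n : ℕ} {E X : ↥(SG G)} (hE : IsStandardFrom n E)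
    (hX : ∀ i < first E n, X.1 i = E.1 i) : ∃ D ∈ fix G n, X = E * D := by
  have hle (j : ℕ) : first E n ≤ first X (n + j) := by
    refine le_trans ?_ ((first_strictMono X).monotone (Nat.le_add_right n j))
    by_contra! hlt
    exact hlt.not_ge (first_le ((hX _ hlt).symm.trans (apply_first X n)))
  obtain ⟨D, hD, hDX, -⟩ := exists_mem_fix_of_tail (n := n) (f := fun i => X.1 (first E n + i))
    (m := fun j => first X (n + j) - first E n)
    (fun i j hij => Nat.sub_le_sub_right ((first_strictMono X).monotone (by lia)) _)
    (fun j => by simp only [Nat.add_sub_of_le (hle j), apply_first])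
    fun i j g h => Nat.sub_le_iff_le_add'.2 (first_le h)
  refine ⟨D, hD, ext fun i => ?_⟩
  rcases lt_or_ge i (first E n) with hi | hi
  · rw [hX i hi, mul_apply_of_lt_first hD hi]
  · obtain ⟨i, rfl⟩ := Nat.exists_eq_add_of_le hi
    rw [mul_apply, hE, letterAct_some_one, hDX]

theorem IsStandardFrom.exists_mul_eq {n : ℕ} {E D : ↥(SG G)} (hE : IsStandardFrom n E)
    (hD : D ∈ fix G n) : ∃ D' ∈ fix G (first E n), D' * E = E * D := by
  let σ : ℕ → Option (ℕ × G) := fun j => some (first E j, 1)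
  have hσ (o : Option (ℕ × G)) : letterAct E.1 (letterAct σ o) = o := by
    rw [letterAct_letterAct]
    exact letterAct_eq_self fun j _ _ => by rw [compG_apply, letterAct_some_one, apply_first]
  obtain ⟨D', hD', hD'D, -⟩ := exists_mem_fix_of_tail (n := first E n)
    (f := fun i => letterAct σ (D.1 (n + i))) (m := fun j => first D (n + j) - n)
    (fun i j hij => Nat.sub_le_sub_right ((first_strictMono D).monotone (by lia)) _)
    (fun j => by
      rw [Nat.add_sub_of_le ((Nat.le_add_right n j).trans (le_first D _)), apply_first,
        letterAct_some_one, ← hE.first_add])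
    (fun i j g h => by
      obtain ⟨j', b, c, hb, hc⟩ := exists_of_letterAct_eq_some h
      obtain ⟨hj', -⟩ := Prod.mk.inj (Option.some.inj hc)
      obtain rfl := (first_strictMono E).injective (hj'.trans (hE.first_add j).symm)
      exact Nat.sub_le_iff_le_add'.2 (first_le hb))
  refine ⟨D', hD', ext fun i => ?_⟩
  rcases lt_or_ge i (first E n) with hi | hi
  · rw [mul_apply_of_lt_first hD hi, mul_apply, hD' i hi, letterAct_some_one]
  · obtain ⟨i, rfl⟩ := Nat.exists_eq_add_of_le hi
    rw [mul_apply, hD'D, hσ, mul_apply, hE, letterAct_some_one]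

theorem IsStandardFrom.exists_mul_eq_mul {n : ℕ} {E D : ↥(SG G)} (hE : IsStandardFrom n E)
    (hD : D ∈ fix G (first E n)) : ∃ D' ∈ fix G n, D * E = E * D' :=
  hE.exists_eq_mul fun i hi => by rw [mul_apply, hD i hi, letterAct_some_one]

theorem IsStandardFrom.exists_eq_mul_succ {n : ℕ} {E X : ↥(SG G)} (hE : IsStandardFrom n E)
    (hfirst : first X n = first E n) (hX : ∀ i < first E n, X.1 i = E.1 i) :
    ∃ D ∈ fix G (n + 1), X = E * D := by
  obtain ⟨D, -, rfl⟩ := hE.exists_eq_mul hX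
  rw [first_mul] at hfirst
  exact ⟨D, mem_fix_succ_iff.2 ((first_strictMono E).injective hfirst), rfl⟩

theorem exists_isStandardFrom (n : ℕ) (C : ↥(SG G)) :
    ∃ E, IsStandardFrom n E ∧ first E n = first C n ∧ ∀ i < first C n, E.1 i = C.1 i := by
  let f : ℕ → Option (ℕ × G) := fun i =>
    if i < first C n then C.1 i else some (n + (i - first C n), 1)
  have hlow {i : ℕ} (hi : i < first C n) : f i = C.1 i := if_pos hi
  have hhigh (i : ℕ) : f (first C n + i) = some (n + i, 1) := by simp [f]
  have hmem : f ∈ SG G := by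
    refine mem_of_monotone (m := fun j => first C (min j n) + (j - n))
      (fun i j hij => add_le_add ((first_strictMono C).monotone (min_le_min_right n hij))
        (Nat.sub_le_sub_right hij n)) (fun j => ?_) fun i j g h => ?_
    · rcases lt_or_ge j n with hj | hj
      · rw [min_eq_left hj.le, Nat.sub_eq_zero_of_le hj.le, add_zero,
          hlow (first_strictMono C hj), apply_first]
      · rw [min_eq_right hj, hhigh, Nat.add_sub_of_le hj]
    · rcases lt_or_ge i (first C n) with hi | hi
      · rw [hlow hi] at h
        have hj := lt_of_lt_first hi h
        rw [min_eq_left hj.le, Nat.sub_eq_zero_of_le hj.le]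
        exact first_le h
      · obtain ⟨i, rfl⟩ := Nat.exists_eq_add_of_le hi
        rw [hhigh, Option.some_inj, Prod.mk.injEq] at h
        rw [← h.1, min_eq_right (Nat.le_add_right n i), Nat.add_sub_cancel_left]
  let E : ↥(SG G) := ⟨f, hmem⟩
  have hE : first E n = first C n := by
    refine le_antisymm (first_le (hhigh 0)) (not_lt.1 fun h => ?_)
    exact h.not_ge (first_le ((hlow h).symm.trans (apply_first E n)))
  exact ⟨E, fun i => hE ▸ hhigh i, hE, fun i => hlow⟩

theorem apply_mem_lowLetters {A : ↥(SG G)} {i n : ℕ} (hi : i < first A n) :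
    A.1 i ∈ lowLetters G n :=
  fun _ _ => lt_of_lt_first hi

theorem letterAct_of_mem_lowLetters {C : ↥(SG G)} {n : ℕ} (hC : C ∈ fix G n)
    {o : Option (ℕ × G)} (ho : o ∈ lowLetters G n) : letterAct C.1 o = o :=
  letterAct_eq_self fun j g h => hC j (ho j g h)

variable (G) in
/-- The beginnings of length `k` that involve exactly the blocks below `n`, each represented by
the element that continues it by the blocks `n, n + 1, …`. -/
def beginnings (n k : ℕ) : Set ↥(SG G) :=
  {E | IsStandardFrom n E ∧ first E n = k}

theorem finite_beginnings [Finite G] (n k : ℕ) : (beginnings G n k).Finite := by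
  refine Set.Finite.of_injOn (f := fun E (i : Fin k) => E.1 i)
    (t := Set.univ.pi fun _ => lowLetters G n) ?_ ?_ (Set.Finite.pi fun _ => finite_lowLetters n)
  · rintro E ⟨-, rfl⟩ i -
    exact apply_mem_lowLetters i.2
  · rintro E ⟨hE, rfl⟩ E' ⟨hE', hk⟩ h
    refine ext fun i => ?_
    rcases lt_or_ge i (first E n) with hi | hi
    · exact congrFun h ⟨i, hi⟩
    · obtain ⟨i, rfl⟩ := Nat.exists_eq_add_of_le hi
      rw [hE, ← hk, hE']

/-! ### The pigeonhole principle -/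

/-- The word formed by the letters of `X` from position `n` up to the first occurrence of the
block `m`. -/
noncomputable def segment (n m : ℕ) (X : ↥(SG G)) : FreeMonoid (Option (ℕ × G)) :=
  FreeMonoid.ofList ((List.range (first X m - n)).map fun i => X.1 (n + i))

theorem segment_mul (n m : ℕ) (A B : ↥(SG G)) :
    segment n m (A * B) = FreeMonoid.map (letterAct B.1) (segment n (first B m) A) := by
  simp only [segment, first_mul, mul_apply, FreeMonoid.ofList_map, FreeMonoid.map_map,
    Function.comp_def]

theorem mem_iff_of_segment_eq {n : ℕ} {V : Set ↥(SG G)}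
    (hV : ∀ c ∈ fix G n, ∀ x ∈ fix G (n + 1), (c * x ∈ V ↔ c ∈ V)) {X X' : ↥(SG G)}
    (hX : X ∈ fix G n) (hX' : X' ∈ fix G n) (h : segment n n X = segment n n X') :
    X ∈ V ↔ X' ∈ V := by
  have hlist := FreeMonoid.ofList.injective h
  have hfirst : first X n = first X' n := by
    have hlen := congrArg List.length hlist
    simp only [List.length_map, List.length_range] at hlen
    have := le_first X n
    have := le_first X' n
    lia
  rw [hfirst] at hlist
  have hagree : ∀ i < first X n, X'.1 i = X.1 i := by
    intro i hi
    rcases lt_or_ge i n with hin | hin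
    · rw [hX i hin, hX' i hin]
    · obtain ⟨i, rfl⟩ := Nat.exists_eq_add_of_le hin
      exact (List.map_inj_left.1 hlist i (List.mem_range.2 (by lia))).symm
  obtain ⟨E, hE, hEX, hEX'⟩ := exists_isStandardFrom n X
  obtain ⟨D, hD, hXE⟩ := hE.exists_eq_mul_succ hEX.symm fun i hi => (hEX' i (hEX ▸ hi)).symm
  obtain ⟨D', hD', hXE'⟩ := hE.exists_eq_mul_succ (hfirst.symm.trans hEX.symm) fun i hi =>
    (hagree i (hEX ▸ hi)).trans (hEX' i (hEX ▸ hi)).symm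
  have hEn : E ∈ fix G n := fun i hi => by
    rw [hEX' i (hi.trans_le (le_first X n)), hX i hi]
  rw [hXE, hXE', hV E hEn D hD, hV E hEn D' hD']

theorem exists_segment_eq_substWord {n : ℕ} {w : FreeMonoid (Option (ℕ × G))}
    {y : ℕ → FreeMonoid (Option (Option (ℕ × G)))} (hw : ∀ o ∈ w, o ∈ lowLetters G n)
    (hy : ∀ i o, some o ∈ y i → o ∈ lowLetters G n) (hLV : ∀ i, IsLeftVariable (y i)) :
    ∃ D ∈ fix G n, ∀ m, segment n (n + m) D = substWord w y (fun i => some (n + i, 1)) m := by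
  let u (m : ℕ) : List (Option (ℕ × G)) := (substWord w y (fun i => some (n + i, 1)) m).toList
  have hu (m : ℕ) : ∃ t, u (m + 1) = u m ++ some (n + m, 1) :: t := by
    obtain ⟨t, ht⟩ := hLV m
    exact ⟨(substVar (some (n + m, 1)) t).toList, by simp [u, substWord, ht, substVar]⟩
  have hlen (m : ℕ) : (u m).length < (u (m + 1)).length := by
    obtain ⟨t, ht⟩ := hu m
    simp [ht]
  have hmono : StrictMono fun m => (u m).length := strictMono_nat_of_lt_succ hlen
  obtain ⟨f, hf⟩ := exists_forall_eq_map_range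
    (fun m => (hu m).elim fun t ht => ht ▸ List.prefix_append _ _) fun m => hmono.le_apply
  have hfirst (m : ℕ) : f (u m).length = some (n + m, 1) := by
    obtain ⟨t, ht⟩ := hu m
    have h : (u (m + 1))[(u m).length]? = some (some (n + m, 1)) := by simp [ht]
    rw [hf (m + 1), List.getElem?_map, List.getElem?_range (hlen m)] at h
    exact Option.some.inj h
  have hle (i m : ℕ) (g : G) (h : f i = some (n + m, g)) : (u m).length ≤ i := by
    by_contra! hi
    have hmem : f i ∈ u m := hf m ▸ List.mem_map.2 ⟨i, List.mem_range.2 hi, rfl⟩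
    rcases mem_substWord hmem with ho | ⟨i', ho | ⟨hi', ho⟩⟩
    · exact (Nat.le_add_right n m).not_gt (hw _ ho _ _ h)
    · exact (Nat.le_add_right n m).not_gt (hy i' _ ho _ _ h)
    · rw [h, Option.some_inj, Prod.mk.injEq] at ho
      lia
  obtain ⟨D, hD, hDf, hDfirst⟩ := exists_mem_fix_of_tail hmono.monotone hfirst hle
  refine ⟨D, hD, fun m => ?_⟩
  simp only [segment, hDfirst, hDf, Nat.add_sub_cancel_left, ← hf]
  rfl

theorem exists_segment_mul_eq_map_substWord {n : ℕ} {w : FreeMonoid (lowLetters G n)}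
    {y : ℕ → FreeMonoid (Option (lowLetters G n))} {C D : ↥(SG G)}
    (hD : ∀ m, segment n (n + m) D = substWord (FreeMonoid.map (↑) w)
      (fun i => FreeMonoid.map (Option.map (↑)) (y i)) (fun i => some (n + i, 1)) m)
    (hC : C ∈ fix G n) :
    ∃ l m, segment n n (D * C) = FreeMonoid.map (↑) (substWord w y l m) := by
  obtain ⟨m, hm⟩ := Nat.exists_eq_add_of_le (le_first C n)
  have hletter (i : ℕ) : ∃ o : lowLetters G n, i < m → (o : Option (ℕ × G)) = C.1 (n + i) := by
    by_cases hi : i < m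
    · exact ⟨⟨C.1 (n + i), apply_mem_lowLetters (by lia)⟩, fun _ => rfl⟩
    · exact ⟨⟨none, fun _ _ h => nomatch h⟩, fun h => absurd h hi⟩
  choose l hl using hletter
  have hfix : letterAct C.1 ∘ ((↑) : lowLetters G n → Option (ℕ × G)) = (↑) :=
    funext fun o => letterAct_of_mem_lowLetters hC o.2
  refine ⟨l, m, ?_⟩
  rw [segment_mul, hm, hD, map_substWord, map_substWord]
  simp only [FreeMonoid.map_map, Option.map_comp_map, hfix]
  refine substWord_congr fun i hi => ?_
  simp only [Function.comp_apply, letterAct_some_one, hl i hi]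

theorem pigeonhole [Finite G] (n : ℕ) (V : Set ↥(SG G))
    (hV : ∀ c ∈ fix G n, ∀ x ∈ fix G (n + 1), (c * x ∈ V ↔ c ∈ V)) :
    ∃ d ∈ fix G n, Accepts (fix G) V d n ∨ Accepts (fix G) Vᶜ d n := by
  have : Finite (lowLetters G n) := finite_lowLetters n
  have : Nonempty (lowLetters G n) := ⟨⟨none, fun _ _ h => nomatch h⟩⟩
  obtain ⟨w, y, hLV, hA⟩ := carlson_simpson {u : FreeMonoid (lowLetters G n) |
    ∃ X ∈ fix G n, X ∈ V ∧ segment n n X = FreeMonoid.map (↑) u}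
  obtain ⟨D, hD, hseg⟩ := exists_segment_eq_substWord
    (w := FreeMonoid.map Subtype.val w)
    (y := fun i => FreeMonoid.map (Option.map Subtype.val) (y i))
    (fun o ho => by
      obtain ⟨o', -, rfl⟩ := FreeMonoid.mem_map.1 ho
      exact o'.2)
    (fun i o ho => by
      obtain ⟨_ | o', -, h⟩ := FreeMonoid.mem_map.1 ho
      · exact nomatch h
      · exact Option.some.inj h ▸ o'.2)
    fun i => (hLV i).map Subtype.val
  refine ⟨D, hD, hA.imp (fun hA C hC => ?_) fun hA C hC hCV => ?_⟩
  · obtain ⟨l, m, h⟩ := exists_segment_mul_eq_map_substWord hseg hC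
    obtain ⟨X, hX, hXV, hXu⟩ := hA l m
    exact (mem_iff_of_segment_eq hV hX (mul_mem hD hC) (hXu.trans h.symm)).1 hXV
  · obtain ⟨l, m, h⟩ := exists_segment_mul_eq_map_substWord hseg hC
    exact hA l m ⟨D * C, mul_mem hD hC, hCV, h⟩

theorem ramseyFiltration_fix [Finite G] : RamseyFiltration (fix G) (beginnings G) where
  antitone := fix_antitone
  fusion _ := fusion
  finite := finite_beginnings
  push := by
    rintro n _ E ⟨hE, rfl⟩ d hd
    exact hE.exists_mul_eq hd
  pull := by
    rintro n _ E ⟨hE, rfl⟩ d hd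
    exact hE.exists_mul_eq_mul hd
  cover C n := by
    obtain ⟨E, hE, hEC, hagree⟩ := exists_isStandardFrom n C
    exact ⟨first C n, le_first C n, E, ⟨hE, hEC⟩,
      hE.exists_eq_mul fun i hi => (hagree i (hEC ▸ hi)).symm⟩
  pigeonhole := pigeonhole

/-! ### The approximations -/

theorem rG_eq {n : ℕ} (hn : n ≠ 0) (A : ↥(SG G)) :
    rG n A.1 = (List.range (first A n)).map A.1 := by
  have hmin : sInf {i | A.1 i = some (n, (1 : G))} = first A n :=
    le_antisymm (Nat.sInf_le (apply_first A n))
      (le_csInf ⟨_, apply_first A n⟩ fun i hi => first_le hi)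
  rw [rG, if_neg hn, hmin, List.ofFn_eq_map, ← List.map_coe_finRange_eq_range, List.map_map]
  rfl

theorem some_one_mem_rG_iff {l n : ℕ} {A : ↥(SG G)} : some (l, 1) ∈ rG n A.1 ↔ l < n := by
  rcases eq_or_ne n 0 with rfl | hn
  · simp [rG]
  rw [rG_eq hn, List.mem_map]
  constructor
  · rintro ⟨i, hi, h⟩
    exact lt_of_lt_first (List.mem_range.1 hi) h
  · exact fun hl => ⟨first A l, List.mem_range.2 (first_strictMono A hl), apply_first A l⟩

theorem rG_mul_eq_iff {n : ℕ} (hn : n ≠ 0) (B C : ↥(SG G)) :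
    rG n (B * C).1 = rG n B.1 ↔ C ∈ fix G (n + 1) := by
  rw [rG_eq hn, rG_eq hn, mem_fix_succ_iff, first_mul]
  constructor
  · intro h
    exact (first_strictMono B).injective (by simpa using congrArg List.length h)
  · intro h
    rw [h]
    have hC : C ∈ fix G n := fix_antitone n.le_succ (mem_fix_succ_iff.2 h)
    exact List.map_congr_left fun i hi => mul_apply_of_lt_first hC (List.mem_range.1 hi)

-- The approximation `rG 0` is empty, whereas for `n > 0` a common value of `rG n` forces the
-- first occurrences of the block `n` to coincide.
theorem isApproximation_rG : IsApproximation (fix G) (fun n => if n = 0 then 0 else n + 1)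
    (fun n (A : ↥(SG G)) => rG n A.1) where
  index_eq m n A B h := by
    have hlt (l : ℕ) : l < m ↔ l < n := by
      rw [← some_one_mem_rG_iff (A := A), ← some_one_mem_rG_iff (A := B), h]
    exact le_antisymm (not_lt.1 fun h => ((hlt n).1 h).false)
      (not_lt.1 fun h => ((hlt m).2 h).false)
  mul_eq_iff n B C := by
    rcases eq_or_ne n 0 with rfl | hn
    · exact iff_of_true rfl fun i hi => absurd hi i.not_lt_zero
    · simpa only [if_neg hn] using rG_mul_eq_iff hn B C
  le_level n := by
    split_ifs <;> lia

end SG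

end PartialPartitions

/-- **Theorem (Prömel–Voigt).** For every finite group `G`,
`(S_G(ω;ω), ≤, r)` is a topological Ramsey space, where `A ≤ B` iff
`A = B·C` for some `C ∈ S_G(ω;ω)`. -/
theorem sg_is_topological_ramsey_space (G : Type) [Group G] [Fintype G] :
    IsTopRamseySpace
      (fun A B : ↥(SG G) => ∃ C ∈ SG G, A.val = compG B.val C)
      (fun n (A : ↥(SG G)) => rG n A.val) := by
  rw [SG.refines_eq_dvd]
  exact SG.isApproximation_rG.isTopRamseySpace SG.ramseyFiltration_fix
end

section
/- Let F be a finite field. The triple (M_∞(F), ≤, r) is a topological Ramsey space. -/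
open Topology

/-- The position of the leading (first nonzero) entry of the `n`-th column of
a matrix `A : ℕ → ℕ → F` (`A n j` = entry of column `n`, row `j`). -/
noncomputable def leadPos {F : Type} [Field F] (A : ℕ → ℕ → F) (n : ℕ) : ℕ :=
  sInf {j | A n j ≠ 0}

/-- `M_∞(F)`: the reduced (column) echelon `ℕ × ℕ` matrices over `F`: all
columns nonzero, leading positions strictly increasing, leading entries `1`,
and each leading position zero in the other columns. -/
def Minf (F : Type) [Field F] : Set (ℕ → ℕ → F) :=
  {A | (∀ n, ∃ j, A n j ≠ 0) ∧ StrictMono (leadPos A) ∧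
       (∀ n, A n (leadPos A n) = 1) ∧ ∀ n n', n' ≠ n → A n' (leadPos A n) = 0}

/-- The product topology on `F^ℕ` with `F` discrete. -/
def topCol (F : Type) [Field F] : TopologicalSpace (ℕ → F) :=
  @Pi.topologicalSpace ℕ (fun _ => F) (fun _ => ⊥)

/-- `A ≤ B`: every column of `A` belongs to the closure (in `F^ℕ` with the
product topology, `F` discrete) of the linear span of the columns of `B`. -/
def Mle (F : Type) [Field F] (A B : ℕ → ℕ → F) : Prop :=
  ∀ n, A n ∈ @closure (ℕ → F) (topCol F)
    ((Submodule.span F (Set.range B) : Submodule F (ℕ → F)) : Set (ℕ → F))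

/-- The approximation map: `r(0,A) = ∅` and `r(n+1,A)` is the restriction of
`A` (as a graph) to `n × p_n(A)`, i.e. the first `n` columns truncated to
their first `p_n(A)` rows. -/
def rMat (F : Type) [Field F] (n : ℕ) (A : ℕ → ℕ → F) : Set ((ℕ × ℕ) × F) :=
  {q | ∃ n', n = n' + 1 ∧ q.1.1 < n' ∧ q.1.2 < leadPos A n' ∧ q.2 = A q.1.1 q.1.2}

/-!
An echelon matrix is determined by the closed span `V` of its columns, and these closed spans are
exactly the closed infinite-dimensional subspaces of `F^ℕ`. The leading positions of the matrix are
the pivots of `V`, the positions of first nonzero entries of elements of `V`, and its approximations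
correspond to the truncations of `V`, the projections of `V` to initial segments of coordinates.

By the usual combinatorial forcing, the Ramsey property of Ellentuck-open and meager sets follows
from fusion (a consequence of compactness), amalgamation (a consequence of modularity of the
lattice of subspaces) and a pigeonhole principle for one-step extensions of a truncation at height
`N`. If `M ≥ N` is the first new pivot of `U ≤ V`, then the entries of elements of `U` at the pivots
of `V` in `[N, M)` are linear functionals of their first `N` coordinates, so a one-step extension
is coded by a finite word over the finite alphabet of functionals on `F^N`, and an infinite variable
word over this alphabet codes a subspace of `V`. The pigeonhole principle thus is the
Carlson–Simpson theorem on infinite variable words, which is proved here with an idempotent in the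
semigroup of ultrafilters on the words.
-/

namespace EchelonRamsey

section CarlsonSimpson

open Filter FreeMonoid

attribute [local instance] Ultrafilter.mul Ultrafilter.semigroup

theorem ultrafilter_map_mul {M N : Type*} [Mul M] [Mul N] (f : M →ₙ* N)
    (U V : Ultrafilter M) : (U * V).map f = U.map f * V.map f := by
  ext s
  change (∀ᶠ m in ↑(U * V), f m ∈ s) ↔
    ∀ᶠ m in (U : Filter M), ∀ᶠ m' in (V : Filter M), f m * f m' ∈ s
  rw [Ultrafilter.eventually_mul]
  simp only [map_mul]

theorem continuous_ultrafilter_map {α β : Type*} (f : α → β) :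
    Continuous (Ultrafilter.map f) :=
  ultrafilterBasis_is_basis.continuous_iff.2 <| Set.forall_mem_range.mpr fun s ↦
    ultrafilter_isOpen_basic (f ⁻¹' s)

section LeftIdeals

variable {M : Type*} [TopologicalSpace M]

/-- Nonempty closed left ideals, for a multiplication on a topological space. -/
structure IsClosedLeftIdeal [Mul M] (L : Set M) : Prop where
  isClosed : IsClosed L
  nonempty : L.Nonempty
  mul_mem : ∀ m, ∀ x ∈ L, m * x ∈ L

theorem exists_minimal_isClosedLeftIdeal [Mul M] [Nonempty M] [CompactSpace M] :
    ∃ L : Set M, Minimal IsClosedLeftIdeal L := by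
  refine zorn_superset {L : Set M | IsClosedLeftIdeal L} fun c hc hchain => ?_
  refine ⟨⋂₀ c, ⟨isClosed_sInter fun L hL => (hc hL).isClosed, ?_, fun m x hx L hL =>
    (hc hL).mul_mem m x (hx L hL)⟩, fun _ => Set.sInter_subset_of_mem⟩
  obtain rfl | hne := c.eq_empty_or_nonempty
  · rw [Set.sInter_empty]
    exact Set.univ_nonempty
  have : Nonempty c := hne.coe_sort
  rw [Set.sInter_eq_iInter]
  exact IsCompact.nonempty_iInter_of_directed_nonempty_isCompact_isClosed _
    (DirectedOn.directed_val (IsChain.directedOn hchain.symm)) (fun L => (hc L.2).nonempty)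
    (fun L => (hc L.2).isClosed.isCompact) (fun L => (hc L.2).isClosed)

theorem mul_eq_left_of_minimal_isClosedLeftIdeal [Semigroup M] [CompactSpace M] [T2Space M]
    (hcont : ∀ m : M, Continuous (· * m)) {L : Set M} (hL : Minimal IsClosedLeftIdeal L)
    {e x : M} (he : e ∈ L) (hee : IsIdempotentElem e) (hx : x ∈ L) : x * e = x := by
  have himage : (· * e) '' L = L := by
    refine hL.eq_of_subset ⟨(hcont e).isClosedMap _ hL.prop.isClosed, hL.prop.nonempty.image _, ?_⟩
      (Set.image_subset_iff.2 fun y _ => hL.prop.mul_mem y e he)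
    rintro m _ ⟨y, hy, rfl⟩
    exact ⟨m * y, hL.prop.mul_mem m y hy, mul_assoc _ _ _⟩
  obtain ⟨y, -, rfl⟩ := himage.symm ▸ hx
  simp only [mul_assoc, hee.eq]

end LeftIdeals

variable {A κ : Type*}

/-- Substitution of the letter `a` for the variable `none` in a variable word. -/
def subst (a : A) : FreeMonoid (Option A) →* FreeMonoid A :=
  FreeMonoid.map fun o => o.getD a

theorem subst_map_some (a : A) (w : FreeMonoid A) : subst a (FreeMonoid.map some w) = w :=
  FreeMonoid.map_map.trans (DFunLike.congr_fun FreeMonoid.map_id w)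

/-- The left ideal of words that start with the variable. -/
def leftVariableWords (A : Type*) : Set (FreeMonoid (Option A)) :=
  {w | ∃ v, w = of none * v}

theorem exists_idempotent_left_variable_ultrafilter {L : Set (Ultrafilter (FreeMonoid A))}
    (hL : IsClosedLeftIdeal L) :
    ∃ q : Ultrafilter (FreeMonoid (Option A)),
      leftVariableWords A ∈ q ∧ (∀ a, q.map (subst a) ∈ L) ∧ IsIdempotentElem q := by
  have hmap (a : A) (U V : Ultrafilter (FreeMonoid (Option A))) :
      (U * V).map (subst a) = U.map (subst a) * V.map (subst a) :=
    ultrafilter_map_mul (subst a).toMulHom U V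
  let Q : Set (Ultrafilter (FreeMonoid (Option A))) :=
    {q | leftVariableWords A ∈ q} ∩ ⋂ a, {q | q.map (subst a) ∈ L}
  obtain ⟨q, ⟨hq, hqL⟩, hqq⟩ : ∃ q ∈ Q, q * q = q := by
    refine exists_idempotent_in_compact_subsemigroup Ultrafilter.continuous_mul_left Q ?_ ?_ ?_
    · obtain ⟨p, hp⟩ := hL.nonempty
      refine ⟨(pure (of none) : Ultrafilter _) * p.map (FreeMonoid.map some), ?_,
        Set.mem_iInter.2 fun a => ?_⟩
      · have h : ∀ᶠ w in (p.map (FreeMonoid.map some) : Filter (FreeMonoid (Option A))),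
            of none * w ∈ leftVariableWords A := Eventually.of_forall fun v => ⟨v, rfl⟩
        exact h
      · have hp_subst : (p.map (FreeMonoid.map some)).map (subst a) = p := by
          rw [Ultrafilter.map_map, funext (f := subst a ∘ _) (subst_map_some a)]
          exact Ultrafilter.map_id p
        rw [Set.mem_ofPred_eq, hmap, hp_subst]
        exact hL.mul_mem _ _ hp
    · exact ((ultrafilter_isClosed_basic _).inter (isClosed_iInter fun a =>
        hL.isClosed.preimage (continuous_ultrafilter_map _))).isCompact
    · rintro x ⟨hx, -⟩ y ⟨-, hy⟩
      refine ⟨?_, Set.mem_iInter.2 fun a => ?_⟩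
      · change ∀ᶠ w in (↑(x * y) : Filter (FreeMonoid (Option A))), w ∈ leftVariableWords A
        rw [Ultrafilter.eventually_mul]
        filter_upwards [hx] with w ⟨v, hv⟩
        exact Eventually.of_forall fun u => ⟨v * u, by rw [hv, mul_assoc]⟩
      · rw [Set.mem_ofPred_eq, hmap]
        exact hL.mul_mem _ _ (Set.mem_iInter.1 hy a)
  exact ⟨q, hq, Set.mem_iInter.1 hqL, hqq⟩

theorem exists_left_variable_ultrafilter (A : Type*) :
    ∃ (p : Ultrafilter (FreeMonoid A)) (q : Ultrafilter (FreeMonoid (Option A))),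
      leftVariableWords A ∈ q ∧ (∀ a, p * q.map (subst a) = p) ∧
      ∀ a b, q.map (subst a) * q.map (subst b) = q.map (subst a) := by
  obtain ⟨L, hL⟩ := exists_minimal_isClosedLeftIdeal (M := Ultrafilter (FreeMonoid A))
  obtain ⟨p, hp⟩ := hL.prop.nonempty
  obtain ⟨q, hq, hqL, hqq⟩ := exists_idempotent_left_variable_ultrafilter hL.prop
  have hidem (a : A) : IsIdempotentElem (q.map (subst a)) :=
    (ultrafilter_map_mul (subst a).toMulHom q q).symm.trans (congrArg _ hqq)
  have hright (a : A) {x : Ultrafilter (FreeMonoid A)} (hx : x ∈ L) : x * q.map (subst a) = x :=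
    mul_eq_left_of_minimal_isClosedLeftIdeal Ultrafilter.continuous_mul_left hL (hqL a) (hidem a) hx
  exact ⟨p, q, hq, fun a => hright a hp, fun a b => hright b (hqL a)⟩

theorem exists_ultrafilter_const {α : Type*} [Finite κ] (p : Ultrafilter α) (χ : α → κ) :
    ∃ c, {x | χ x = c} ∈ p :=
  Ultrafilter.eventually_exists_iff.1 (Eventually.of_forall fun x => ⟨χ x, rfl⟩)

theorem exists_extendible_set [Finite A] [Finite κ] (χ : FreeMonoid A → κ) :
    ∃ (H : Set (FreeMonoid A)) (c : κ), H.Nonempty ∧ (∀ x ∈ H, χ x = c) ∧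
      ∀ X ⊆ H, X.Finite → ∃ v, ∀ x ∈ X, ∀ a, x * subst a (of none * v) ∈ H := by
  obtain ⟨p, q, hq, hp, hqq⟩ := exists_left_variable_ultrafilter A
  obtain ⟨c, hG⟩ := exists_ultrafilter_const p χ
  set G : Set (FreeMonoid A) := {x | χ x = c}
  let H : Set (FreeMonoid A) :=
    {x | x ∈ G ∧ ∀ a, ∀ᶠ w in (q : Filter (FreeMonoid (Option A))), x * subst a w ∈ G}
  have hH : H ∈ p := by
    refine inter_mem hG ?_
    have hpq : ∀ a, ∀ᶠ x in (p : Filter (FreeMonoid A)),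
        ∀ᶠ w in (q : Filter (FreeMonoid (Option A))), x * subst a w ∈ G := fun a => by
      have h : G ∈ p * q.map (subst a) := by rwa [hp]
      exact h
    exact eventually_all.2 hpq
  refine ⟨H, c, p.nonempty_of_mem hH, fun x hx => hx.1, fun X hXH hX => ?_⟩
  have hext : ∀ᶠ w in (q : Filter (FreeMonoid (Option A))), ∀ x ∈ X, ∀ a, x * subst a w ∈ H := by
    rw [hX.eventually_all]
    refine fun x hx => eventually_all.2 fun a => ((hXH hx).2 a).and (eventually_all.2 fun b => ?_)
    have h : {y | x * y ∈ G} ∈ q.map (subst a) * q.map (subst b) := by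
      rw [hqq]
      exact (hXH hx).2 a
    have h' : ∀ᶠ w in (q : Filter (FreeMonoid (Option A))),
        ∀ᶠ w' in (q : Filter (FreeMonoid (Option A))), x * (subst a w * subst b w') ∈ G := h
    simpa only [mul_assoc] using h'
  obtain ⟨w, hw, v, rfl⟩ := (hext.and hq).exists
  exact ⟨v, hw⟩

/-- Infinite variable words over the alphabet `A`. The variables are named by the position of their
first occurrence: `Sum.inr k` stands for the variable that occurs first at position `k`. -/
structure VariableWord (A : Type*) where
  letter : ℕ → A ⊕ ℕ
  first_occurrence : ∀ i k, letter i = Sum.inr k → k ≤ i ∧ letter k = Sum.inr k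
  infinite_free : {k | letter k = Sum.inr k}.Infinite

/-- The prefix of length `n` of the word obtained from `z` by substituting `g k` for the variable
named `k`. -/
def VariableWord.eval (z : VariableWord A) (g : ℕ → A) (n : ℕ) : List A :=
  (List.range n).map fun i => Sum.elim id g (z.letter i)

/-- Finite prefixes of variable words. Substitution into such a prefix `P` always yields a word in
`H`, and so does substitution into the part of `P` that precedes the first occurrence of a variable.
-/
structure IsVariablePrefix (H : Set (List A)) (P : List (A ⊕ ℕ)) : Prop where
  map_mem : ∀ g : ℕ → A, P.map (Sum.elim id g) ∈ H
  first_occurrence : ∀ i k : ℕ, P[i]? = some (Sum.inr k) → k ≤ i ∧ P[k]? = some (Sum.inr k)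
  map_take_mem : ∀ k : ℕ, P[k]? = some (Sum.inr k) →
    ∀ g : ℕ → A, (P.take k).map (Sum.elim id g) ∈ H

theorem IsVariablePrefix.append {H : Set (List A)} {P t : List (A ⊕ ℕ)} (hP : IsVariablePrefix H P)
    (ht : ∀ k, Sum.inr k ∈ t → k = P.length)
    (hmem : ∀ g : ℕ → A, (P ++ Sum.inr P.length :: t).map (Sum.elim id g) ∈ H) :
    IsVariablePrefix H (P ++ Sum.inr P.length :: t) := by
  have hnew {i k : ℕ} (hi : P.length ≤ i)
      (hik : (P ++ Sum.inr P.length :: t)[i]? = some (Sum.inr k)) : k = P.length := by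
    have h := List.mem_of_getElem? ((List.getElem?_append_right hi).symm.trans hik)
    exact (List.mem_cons.1 h).elim (fun h => Sum.inr_injective h) (ht k)
  refine ⟨hmem, fun i k hik => ?_, fun k hk g => ?_⟩
  · rcases lt_or_ge i P.length with hi | hi
    · rw [List.getElem?_append_left hi] at hik
      obtain ⟨hki, hk⟩ := hP.first_occurrence i k hik
      exact ⟨hki, by rw [List.getElem?_append_left (hki.trans_lt hi), hk]⟩
    · obtain rfl := hnew hi hik
      exact ⟨hi, by simp⟩
  · rcases lt_or_ge k P.length with hkP | hkP
    · rw [List.getElem?_append_left hkP] at hk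
      rw [List.take_append_of_le_length hkP.le]
      exact hP.map_take_mem k hk g
    · obtain rfl := hnew hkP hk
      rw [List.take_left]
      exact hP.map_mem g

theorem IsVariablePrefix.exists_extension [Finite A] {H : Set (List A)}
    (hH : ∀ X ⊆ H, X.Finite → ∃ v : List (Option A), ∀ x ∈ X, ∀ a,
      x ++ a :: v.map (·.getD a) ∈ H)
    {P : List (A ⊕ ℕ)} (hP : IsVariablePrefix H P) :
    ∃ t, IsVariablePrefix H (P ++ Sum.inr P.length :: t) := by
  have hfin : (Set.range fun g : ℕ → A => P.map (Sum.elim id g)).Finite := by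
    refine (List.finite_length_eq A P.length).subset ?_
    rintro _ ⟨g, rfl⟩
    exact List.length_map _
  obtain ⟨v, hv⟩ := hH _ (Set.range_subset_iff.2 hP.map_mem) hfin
  refine ⟨v.map fun o => o.elim (Sum.inr P.length) Sum.inl, hP.append (fun k hk => ?_) fun g => ?_⟩
  · obtain ⟨_ | a, -, ho⟩ := List.mem_map.1 hk
    · exact (Sum.inr_injective ho).symm
    · exact (Sum.inl_ne_inr ho).elim
  · have heval : (Sum.elim id g ∘ fun o : Option A => o.elim (Sum.inr P.length) Sum.inl) =
        fun o => o.getD (g P.length) := by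
      funext o
      cases o <;> rfl
    simpa only [List.map_append, List.map_cons, List.map_map, heval, Sum.elim_inr] using
      hv _ ⟨g, rfl⟩ (g P.length)

theorem exists_seq_of_prefix_chain {α : Type*} {P : ℕ → List α} (hP : ∀ r, P r <+: P (r + 1))
    (hlen : StrictMono fun r => (P r).length) :
    ∃ z : ℕ → α, ∀ r i, i < (P r).length → (P r)[i]? = some (z i) := by
  have hmono {r s : ℕ} (hrs : r ≤ s) : P r <+: P s := by
    induction s, hrs using Nat.le_induction with
    | base => exact List.prefix_rfl
    | succ s _ ih => exact ih.trans (hP s)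
  have hlt (i : ℕ) : i < (P (i + 1)).length := (Nat.lt_succ_self i).trans_le hlen.le_apply
  refine ⟨fun i => (P (i + 1))[i]'(hlt i), fun r i hi => ?_⟩
  rw [List.getElem?_eq_getElem hi, Option.some_inj]
  rcases le_total r (i + 1) with h | h
  · exact (hmono h).getElem hi
  · exact ((hmono h).getElem (hlt i)).symm

theorem exists_variableWord_of_prefix_chain {H : Set (List A)} {P : ℕ → List (A ⊕ ℕ)}
    (hP : ∀ r, IsVariablePrefix H (P r))
    (hchain : ∀ r, ∃ t, P (r + 1) = P r ++ Sum.inr (P r).length :: t) :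
    ∃ z : VariableWord A, ∀ g k, z.letter k = Sum.inr k → z.eval g k ∈ H := by
  choose t ht using hchain
  have hlen : StrictMono fun r => (P r).length := strictMono_nat_of_lt_succ fun r => by
    simp only [ht, List.length_append, List.length_cons]
    omega
  have hlt (i : ℕ) : i < (P (i + 1)).length := (Nat.lt_succ_self i).trans_le hlen.le_apply
  obtain ⟨z, hz⟩ := exists_seq_of_prefix_chain (fun r => ht r ▸ List.prefix_append _ _) hlen
  have hfree (r : ℕ) : z (P r).length = Sum.inr (P r).length := by
    rw [← Option.some_inj, ← hz (r + 1) _ (hlen (Nat.lt_succ_self r)), ht]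
    simp
  have hfirst (i k : ℕ) (hik : z i = Sum.inr k) : k ≤ i ∧ z k = Sum.inr k := by
    obtain ⟨hki, hk⟩ := (hP (i + 1)).first_occurrence i k (by rw [hz _ i (hlt i), hik])
    rw [hz _ k (hki.trans_lt (hlt i))] at hk
    exact ⟨hki, Option.some_inj.1 hk⟩
  refine ⟨⟨z, hfirst, (Set.infinite_range_of_injective hlen.injective).mono
    (Set.range_subset_iff.2 hfree)⟩, fun g k hk => ?_⟩
  have htake : (List.range k).map z = (P (k + 1)).take k := by
    refine List.ext_getElem? fun i => ?_
    rcases lt_or_ge i k with hi | hi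
    · simp [List.getElem?_take_of_lt hi, hz _ i (hi.trans (hlt k)), hi]
    · simp [hi]
  have hmem := (hP (k + 1)).map_take_mem k ((hz _ k (hlt k)).trans (congrArg some hk)) g
  rwa [← htake, List.map_map] at hmem

theorem carlson_simpson [Finite A] [Finite κ] (χ : List A → κ) :
    ∃ (z : VariableWord A) (c : κ), ∀ g k, z.letter k = Sum.inr k → χ (z.eval g k) = c := by
  obtain ⟨H, c, ⟨x, hx⟩, hχ, hH⟩ := exists_extendible_set fun w : FreeMonoid A => χ w.toList
  have hstart : IsVariablePrefix H (x.toList.map Sum.inl) := by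
    refine ⟨fun g => ?_, fun i k hik => ?_, fun k hk => ?_⟩
    · rwa [List.map_map, Sum.elim_comp_inl, List.map_id]
    · simp at hik
    · simp at hk
  choose! t ht using fun P (hP : IsVariablePrefix H P) => hP.exists_extension hH
  let P (r : ℕ) : List (A ⊕ ℕ) :=
    Nat.rec (x.toList.map Sum.inl) (fun _ P => P ++ Sum.inr P.length :: t P) r
  have hP (r : ℕ) : IsVariablePrefix H (P r) := Nat.rec hstart (fun r => ht (P r)) r
  obtain ⟨z, hz⟩ := exists_variableWord_of_prefix_chain hP fun r => ⟨t (P r), rfl⟩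
  exact ⟨z, c, fun g k hk => hχ _ (hz g k hk)⟩

end CarlsonSimpson

section Ellentuck

/-- A preorder whose elements can be truncated at every height `N : ℕ`: `agree N U V` says that `U`
and `V` have the same truncation. An element has a new step of its approximation at each of its
`levels`, and whether `M` is a level can be read off the truncation at height `M + 1`. -/
class TruncatedOrder (P : Type*) extends Preorder P where
  agree : ℕ → Setoid P
  agree_antitone : Antitone agree
  levels : P → Set ℕ
  levels_mono : Monotone levels
  levels_infinite : ∀ U, (levels U).Infinite
  mem_levels_of_agree : ∀ {M U V}, agree (M + 1) U V → M ∈ levels V → M ∈ levels U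

namespace TruncatedOrder

variable {P : Type*} [TruncatedOrder P] {N M h : ℕ} {U V W : P}

theorem agree_of_le (hNM : N ≤ M) (hUV : agree M U V) : agree N U V :=
  agree_antitone hNM hUV

theorem agree_refl (N : ℕ) (U : P) : agree N U U := (agree N).refl U

theorem agree_symm (hUV : agree N U V) : agree N V U := (agree N).symm hUV

theorem agree_trans (hUV : agree N U V) (hVW : agree N V W) : agree N U W := (agree N).trans hUV hVW

/-- The Ellentuck neighbourhood of `V` at height `N`, written `[a, V]` when `a` is the truncation of
`V` at height `N`. -/
def nb (N : ℕ) (V : P) : Set P := {U | U ≤ V ∧ agree N U V}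

theorem self_mem_nb (N : ℕ) (V : P) : V ∈ nb N V := ⟨le_rfl, agree_refl N V⟩

theorem nb_subset_nb (hUV : U ∈ nb N V) : nb N U ⊆ nb N V := fun _ hW =>
  ⟨hW.1.trans hUV.1, agree_trans hW.2 hUV.2⟩

theorem nb_antitone (V : P) : Antitone fun N => nb N V := fun _ _ hNM _ hU =>
  ⟨hU.1, agree_of_le hNM hU.2⟩

/-- The increasing enumeration of the levels of `V` that are not below `N`. -/
noncomputable def enumLevels (N : ℕ) (V : P) : ℕ → ℕ := Nat.nth (· ∈ levels V ∩ Set.Ici N)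

theorem infinite_levels_inter_Ici (N : ℕ) (V : P) : (levels V ∩ Set.Ici N).Infinite :=
  Set.infinite_of_forall_exists_gt fun M =>
    let ⟨L, hL, hML⟩ := (levels_infinite V).exists_gt (max M N)
    ⟨L, ⟨hL, (le_max_right M N).trans hML.le⟩, (le_max_left M N).trans_lt hML⟩

theorem enumLevels_strictMono (N : ℕ) (V : P) : StrictMono (enumLevels N V) :=
  Nat.nth_strictMono (infinite_levels_inter_Ici N V)

theorem range_enumLevels (N : ℕ) (V : P) : Set.range (enumLevels N V) = levels V ∩ Set.Ici N :=
  Nat.range_nth_of_infinite (infinite_levels_inter_Ici N V)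

theorem enumLevels_mem (N : ℕ) (V : P) (i : ℕ) : enumLevels N V i ∈ levels V ∩ Set.Ici N :=
  range_enumLevels N V ▸ Set.mem_range_self i

theorem enumLevels_eq_of_agree {i : ℕ} (hUV : agree (enumLevels N V i + 1) U V) :
    enumLevels N U i = enumLevels N V i := by
  classical
  have hlevel {M : ℕ} (hM : M ≤ enumLevels N V i) :
      M ∈ levels U ∩ Set.Ici N ↔ M ∈ levels V ∩ Set.Ici N :=
    have hMUV := agree_of_le (Nat.succ_le_succ hM) hUV
    and_congr_left' ⟨mem_levels_of_agree (agree_symm hMUV), mem_levels_of_agree hMUV⟩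
  have hcount : Nat.count (· ∈ levels U ∩ Set.Ici N) (enumLevels N V i) = i := calc
    _ = Nat.count (· ∈ levels V ∩ Set.Ici N) (enumLevels N V i) :=
      (Nat.count_mono_left fun _ hM => (hlevel hM.le).1).antisymm
        (Nat.count_mono_left fun _ hM => (hlevel hM.le).2)
    _ = i := Nat.count_nth_of_infinite (p := (· ∈ levels V ∩ Set.Ici N))
      (infinite_levels_inter_Ici N V) i
  have hnth := Nat.nth_count (p := (· ∈ levels U ∩ Set.Ici N))
    ((hlevel le_rfl).2 (enumLevels_mem N V i))
  rwa [hcount] at hnth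

/-- The first level of `V` that is not below `N`. -/
noncomputable def nextLevel (N : ℕ) (V : P) : ℕ := enumLevels N V 0

theorem nextLevel_mem (N : ℕ) (V : P) : nextLevel N V ∈ levels V ∩ Set.Ici N := enumLevels_mem N V 0

theorem le_nextLevel (N : ℕ) (V : P) : N ≤ nextLevel N V := (nextLevel_mem N V).2

theorem nextLevel_le (hM : M ∈ levels V) (hNM : N ≤ M) : nextLevel N V ≤ M :=
  Nat.nth_zero.trans_le (Nat.sInf_le ⟨hM, hNM⟩)

theorem nextLevel_eq_of_agree (hUV : agree (nextLevel N V + 1) U V) :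
    nextLevel N U = nextLevel N V :=
  enumLevels_eq_of_agree hUV

/-- `N` together with the heights just above the levels of `V` that are not below `N`: the heights
at which the truncations of `V` represent all its approximations from `N` on. -/
def heights (N : ℕ) (V : P) : Set ℕ := insert N ((· + 1) '' (levels V ∩ Set.Ici N))

theorem heights_mono (N : ℕ) : Monotone (heights N : P → Set ℕ) := fun _ _ hUV =>
  Set.insert_subset_insert (Set.image_mono (Set.inter_subset_inter_left _ (levels_mono hUV)))

theorem self_mem_heights (N : ℕ) (V : P) : N ∈ heights N V := Set.mem_insert _ _

theorem le_of_mem_heights (hh : h ∈ heights N V) : N ≤ h := by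
  obtain rfl | ⟨M, ⟨-, hM⟩, rfl⟩ := hh
  exacts [le_rfl, Nat.le_succ_of_le hM]

theorem nextLevel_add_one_mem_heights (hh : h ∈ heights N V) :
    nextLevel h V + 1 ∈ heights N V :=
  Or.inr ⟨_, ⟨(nextLevel_mem h V).1, (le_of_mem_heights hh).trans (le_nextLevel h V)⟩, rfl⟩

theorem heights_induction {p : ℕ → Prop} (base : p N)
    (step : ∀ h ∈ heights N V, p h → p (nextLevel h V + 1)) : ∀ h ∈ heights N V, p h := by
  have hreach (M : ℕ) (hM : N ≤ M) : ∃ h ∈ heights N V, h ≤ M ∧ p h ∧ M ≤ nextLevel h V := by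
    induction M, hM using Nat.le_induction with
    | base => exact ⟨N, self_mem_heights N V, le_rfl, base, le_nextLevel N V⟩
    | succ M hM ih =>
      obtain ⟨h, hh, hhM, hp, hnext⟩ := ih
      obtain hlt | rfl := hnext.lt_or_eq
      · exact ⟨h, hh, hhM.trans M.le_succ, hp, hlt⟩
      · exact ⟨_, nextLevel_add_one_mem_heights hh, le_rfl, step h hh hp, le_nextLevel _ V⟩
  rintro _ (rfl | ⟨M, ⟨hMV, hM⟩, rfl⟩)
  · exact base
  · obtain ⟨h, hh, hhM, hp, hnext⟩ := hreach M hM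
    rw [hnext.antisymm (nextLevel_le hMV hhM)]
    exact step h hh hp

theorem exists_mem_heights_ge (N M : ℕ) (V : P) : ∃ h ∈ heights N V, M ≤ h := by
  obtain ⟨L, hL, hNL⟩ := (levels_infinite V).exists_gt (max N M)
  exact ⟨L + 1, Or.inr ⟨L, ⟨hL, (le_max_left N M).trans hNL.le⟩, rfl⟩,
    (le_max_right N M).trans (Nat.le_succ_of_le hNL.le)⟩

end TruncatedOrder

open TruncatedOrder

/-- The axioms on a truncated order from which the Ellentuck theorem follows: `fusion` makes fusion
sequences converge, `amalgam` is Todorcevic's amalgamation axiom and `pigeonhole` says that finite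
colourings of the one-step extensions of a truncation can be made constant. -/
class EllentuckOrder (P : Type*) extends TruncatedOrder P where
  finite_quotient : ∀ N, Finite (Quotient (agree N))
  fusion : ∀ (X : ℕ → P) (h : ℕ → ℕ), (∀ k, X (k + 1) ∈ nb (h k) (X k)) →
    (∀ k, ∃ M ∈ levels (X (k + 1)), h k ≤ M ∧ M < h (k + 1)) → ∃ W, ∀ k, W ∈ nb (h k) (X k)
  amalgam : ∀ (N : ℕ) {V V' : P}, V' ≤ V → ∃ W ∈ nb N V, ∀ U ≤ W, agree N U V' → U ≤ V'
  pigeonhole : ∀ (N : ℕ) (V : P) (c : P → Prop),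
    (∀ U U', agree (nextLevel N U + 1) U U' → (c U ↔ c U')) →
    ∃ V' ∈ nb N V, (∀ U ∈ nb N V', c U) ∨ ∀ U ∈ nb N V', ¬ c U

namespace EllentuckOrder

variable {P : Type*} [EllentuckOrder P] {N N₀ h : ℕ} {U V V₀ W : P}

/-- `Φ h` is inherited by the smaller elements and can be obtained below every element under `V₀`
at every height from `N₀` on without changing the truncation. -/
structure IsDense (N₀ : ℕ) (V₀ : P) (Φ : ℕ → P → Prop) : Prop where
  mono : ∀ {h U V}, U ≤ V → Φ h V → Φ h U
  exists_mem_nb : ∀ h ≥ N₀, ∀ V ≤ V₀, ∃ U ∈ nb h V, Φ h U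

theorem IsDense.exists_forall_heights {Φ : ℕ → P → Prop} (hΦ : IsDense N₀ V₀ Φ) :
    ∃ W ∈ nb N₀ V₀, ∀ h ∈ heights N₀ W, Φ h W := by
  choose! f hf hfΦ using hΦ.exists_mem_nb
  let s (k : ℕ) : ℕ × P :=
    Nat.rec (N₀, V₀) (fun _ p => (nextLevel p.1 (f p.1 p.2) + 1, f p.1 p.2)) k
  let H (k : ℕ) : ℕ := (s k).1
  let X (k : ℕ) : P := (s k).2
  have hH (k : ℕ) : H (k + 1) = nextLevel (H k) (X (k + 1)) + 1 := rfl
  have hs (k : ℕ) : N₀ ≤ H k ∧ X k ≤ V₀ := by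
    induction k with
    | zero => exact ⟨le_rfl, le_rfl⟩
    | succ k ih => exact ⟨ih.1.trans (Nat.le_succ_of_le (le_nextLevel _ _)),
        (hf _ ih.1 _ ih.2).1.trans ih.2⟩
  have hX (k : ℕ) : X (k + 1) ∈ nb (H k) (X k) := hf _ (hs k).1 _ (hs k).2
  obtain ⟨W, hW⟩ := fusion X H hX fun k =>
    ⟨_, (nextLevel_mem _ _).1, le_nextLevel (H k) (X (k + 1)), Nat.lt_succ_self _⟩
  have hheights : ∀ h ∈ heights N₀ W, ∃ k, h = H k := by
    refine heights_induction ⟨0, rfl⟩ ?_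
    rintro _ - ⟨k, rfl⟩
    exact ⟨k + 1, congrArg (· + 1) (nextLevel_eq_of_agree (hH k ▸ (hW (k + 1)).2))⟩
  refine ⟨W, hW 0, fun h hh => ?_⟩
  obtain ⟨k, rfl⟩ := hheights h hh
  exact hΦ.mono (hW (k + 1)).1 (hfΦ _ (hs k).1 _ (hs k).2)

/-- Every truncation at height `N` of an element below `W` determines a witness of `Ψ` containing
all the elements below `W` with that truncation. -/
def Captures (N : ℕ) (Ψ : P → Prop) (W : P) : Prop :=
  ∀ U₀ ≤ W, ∃ U₁, Ψ U₁ ∧ ∀ U ≤ W, agree N U U₀ → U ∈ nb N U₁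

theorem Captures.mono {Ψ : P → Prop} (hWV : W ≤ V) (hV : Captures N Ψ V) : Captures N Ψ W :=
  fun U₀ hU₀ =>
    let ⟨U₁, hΨ, hU₁⟩ := hV U₀ (hU₀.trans hWV)
    ⟨U₁, hΨ, fun U hU => hU₁ U (hU.trans hWV)⟩

theorem exists_captures {Ψ : P → Prop} (hΨ : ∀ V ≤ V₀, ∃ U ∈ nb N V, Ψ U) :
    ∃ W ∈ nb N V₀, Captures N Ψ W := by
  classical
  have := finite_quotient (P := P) N
  have := Fintype.ofFinite (Quotient (agree (P := P) N))
  suffices hfin : ∀ s : Finset (Quotient (agree (P := P) N)), ∃ W ∈ nb N V₀,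
      ∀ U₀ ≤ W, ⟦U₀⟧ ∈ s → ∃ U₁, Ψ U₁ ∧ ∀ U ≤ W, agree N U U₀ → U ∈ nb N U₁ by
    obtain ⟨W, hW, hcap⟩ := hfin Finset.univ
    exact ⟨W, hW, fun U₀ hU₀ => hcap U₀ hU₀ (Finset.mem_univ _)⟩
  intro s
  induction s using Finset.induction_on with
  | empty => exact ⟨V₀, self_mem_nb N V₀, fun _ _ h => absurd h (Finset.notMem_empty _)⟩
  | insert a s _ ih =>
    obtain ⟨W, hW, hcap⟩ := ih
    by_cases ha : ∃ U₀ ≤ W, ⟦U₀⟧ = a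
    · obtain ⟨U₀, hU₀, rfl⟩ := ha
      obtain ⟨U₁, hU₁, hΨU₁⟩ := hΨ U₀ (hU₀.trans hW.1)
      obtain ⟨W', hW', hamalgam⟩ := amalgam N (hU₁.1.trans hU₀)
      refine ⟨W', nb_subset_nb hW hW', fun U₂ hU₂ hmem => ?_⟩
      obtain heq | hmem := Finset.mem_insert.1 hmem
      · refine ⟨U₁, hΨU₁, fun U hU hUU₂ => ?_⟩
        have hUU₁ : agree N U U₁ :=
          agree_trans (agree_trans hUU₂ (Quotient.exact heq)) (agree_symm hU₁.2)
        exact ⟨hamalgam U hU hUU₁, hUU₁⟩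
      · obtain ⟨U₁, hΨU₁, hU₁⟩ := hcap U₂ (hU₂.trans hW'.1) hmem
        exact ⟨U₁, hΨU₁, fun U hU => hU₁ U (hU.trans hW'.1)⟩
    · refine ⟨W, hW, fun U₂ hU₂ hmem => hcap U₂ hU₂ ((Finset.mem_insert.1 hmem).resolve_left ?_)⟩
      exact fun heq => ha ⟨U₂, hU₂, heq⟩

theorem exists_captures_heights {Ψ : ℕ → P → Prop}
    (hΨ : ∀ h ≥ N₀, ∀ V ≤ V₀, ∃ U ∈ nb h V, Ψ h U) :
    ∃ W ∈ nb N₀ V₀, ∀ h ∈ heights N₀ W, Captures h (Ψ h) W :=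
  IsDense.exists_forall_heights
    { mono := Captures.mono
      exists_mem_nb := fun h hh _ hV => exists_captures fun U hU => hΨ h hh U (hU.trans hV) }

end EllentuckOrder

end Ellentuck

section CombinatorialForcing

open TruncatedOrder

variable {P : Type*}

/-- The topology on `P` generated by the Ellentuck neighbourhoods `nb N V`. -/
@[reducible]
def ellentuckTopology (P : Type*) [TruncatedOrder P] : TopologicalSpace P where
  IsOpen X := ∀ V ∈ X, ∃ N, nb N V ⊆ X
  isOpen_univ _ _ := ⟨0, Set.subset_univ _⟩
  isOpen_inter _ _ hX hY V hV :=
    let ⟨M, hM⟩ := hX V hV.1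
    let ⟨N, hN⟩ := hY V hV.2
    ⟨max M N, Set.subset_inter ((nb_antitone V (le_max_left M N)).trans hM)
      ((nb_antitone V (le_max_right M N)).trans hN)⟩
  isOpen_sUnion _ hS V := fun ⟨X, hX, hV⟩ =>
    let ⟨N, hN⟩ := hS X hX V hV
    ⟨N, hN.trans (Set.subset_sUnion_of_mem hX)⟩

attribute [local instance] ellentuckTopology

theorem isOpen_nb [TruncatedOrder P] (N : ℕ) (V : P) : IsOpen (nb N V) := fun _ hU =>
  ⟨N, nb_subset_nb hU⟩

namespace EllentuckOrder

variable [EllentuckOrder P] {N N₀ : ℕ} {U V V₀ V₁ : P} {X : Set P}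

/-- No neighbourhood at height `N` of an element of `nb N V` is contained in `X`. -/
def Rejects (X : Set P) (N : ℕ) (V : P) : Prop := ∀ U ∈ nb N V, ¬ nb N U ⊆ X

/-- The neighbourhood of `V` at height `N` lies in `X`, or no smaller one does. -/
def Decides (X : Set P) (N : ℕ) (V : P) : Prop := nb N V ⊆ X ∨ Rejects X N V

theorem Rejects.mem_nb (hV : Rejects X N V) (hU : U ∈ nb N V) : Rejects X N U := fun W hW =>
  hV W (nb_subset_nb hU hW)

theorem exists_decides (X : Set P) (N : ℕ) (V : P) : ∃ U ∈ nb N V, Decides X N U := by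
  by_cases hV : Rejects X N V
  · exact ⟨V, self_mem_nb N V, Or.inr hV⟩
  · obtain ⟨U, hU, hUX⟩ : ∃ U ∈ nb N V, nb N U ⊆ X := by simpa only [Rejects, not_forall, not_not,
      exists_prop] using hV
    exact ⟨U, hU, Or.inl hUX⟩

theorem Rejects.exists_nextLevel (hN : N₀ ≤ N)
    (hV₁ : ∀ h ∈ heights N₀ V₁, Captures h (Decides X h) V₁) (hVV₁ : V ≤ V₁)
    (hV : Rejects X N V) :
    ∃ V' ∈ nb N V, ∀ U ∈ nb N V', Rejects X (nextLevel N U + 1) U := by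
  obtain ⟨V', hV', hc⟩ := pigeonhole N V
    (fun U => ∀ U' ≤ V₁, agree (nextLevel N U + 1) U' U → U' ∈ X) fun U U' hUU' => by
      rw [nextLevel_eq_of_agree (agree_symm hUU')]
      exact forall₂_congr fun W _ => imp_congr_left
        ⟨fun hW => agree_trans hW hUU', fun hW => agree_trans hW (agree_symm hUU')⟩
  refine ⟨V', hV', fun U hU => ?_⟩
  have hUV₁ : U ≤ V₁ := (nb_subset_nb hV' hU).1.trans hVV₁
  have hheight : nextLevel N U + 1 ∈ heights N₀ V₁ := heights_mono N₀ hUV₁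
    (Or.inr ⟨_, ⟨(nextLevel_mem N U).1, hN.trans (le_nextLevel N U)⟩, rfl⟩)
  obtain ⟨U₁, hU₁ | hU₁, hcap⟩ := hV₁ _ hheight U hUV₁
  · have hnot : ¬ ∀ U' ≤ V₁, agree (nextLevel N U + 1) U' U → U' ∈ X := by
      refine hc.resolve_left (fun hall => hV V' hV' fun U' hU' => ?_) U hU
      exact hall U' hU' U' ((nb_subset_nb hV' hU').1.trans hVV₁) (agree_refl _ _)
    exact absurd (fun U' hU' hagree => hU₁ (hcap U' hU' hagree)) hnot
  · exact hU₁.mem_nb (hcap U hUV₁ (agree_refl _ U))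

theorem exists_forall_le_forall_heights {Ψ : ℕ → P → Prop}
    (hmono : ∀ {h U V}, U ∈ nb h V → Ψ h V → Ψ h U)
    (hΨ : ∀ h ≥ N₀, ∀ V ≤ V₀, ∃ U ∈ nb h V, Ψ h U) :
    ∃ W ∈ nb N₀ V₀, ∀ V ≤ W, ∀ h ∈ heights N₀ V, Ψ h V := by
  obtain ⟨W, hW, hcap⟩ := exists_captures_heights hΨ
  refine ⟨W, hW, fun V hVW h hh => ?_⟩
  obtain ⟨U, hU, hcapU⟩ := hcap h (heights_mono N₀ hVW hh) V hVW
  exact hmono (hcapU V hVW (agree_refl h V)) hU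

theorem Rejects.exists_forall_heights
    (hV₁ : ∀ h ∈ heights N V₁, Captures h (Decides X h) V₁) (hV₁X : Rejects X N V₁) :
    ∃ W ∈ nb N V₁, ∀ V ∈ nb N W, ∀ h ∈ heights N V, Rejects X h V := by
  obtain ⟨W, hW, hΨ⟩ := exists_forall_le_forall_heights (N₀ := N) (V₀ := V₁)
    (Ψ := fun h U => (∀ U' ∈ nb h U, Rejects X (nextLevel h U' + 1) U') ∨
      ∀ U' ∈ nb h U, ¬ Rejects X h U')
    (fun hU => Or.imp (fun hΨ U' hU' => hΨ U' (nb_subset_nb hU hU'))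
      fun hΨ U' hU' => hΨ U' (nb_subset_nb hU hU')) fun h hh V hV => by
        by_cases hrej : ∃ U ∈ nb h V, Rejects X h U
        · obtain ⟨U, hU, hUX⟩ := hrej
          obtain ⟨V', hV', hV'X⟩ := hUX.exists_nextLevel hh hV₁ (hU.1.trans hV)
          exact ⟨V', nb_subset_nb hU hV', Or.inl hV'X⟩
        · exact ⟨V, self_mem_nb h V, Or.inr fun U hU hUX => hrej ⟨U, hU, hUX⟩⟩
  refine ⟨W, hW, fun V hV => heights_induction (hV₁X.mem_nb (nb_subset_nb hW hV)) ?_⟩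
  intro h hh hrej
  exact (hΨ V hV.1 h hh).resolve_right (fun hnot => hnot V (self_mem_nb h V) hrej) V
    (self_mem_nb h V)

theorem exists_nb_subset_or_disjoint_of_isOpen (hX : IsOpen X) (N : ℕ) (V : P) :
    ∃ W ∈ nb N V, nb N W ⊆ X ∨ Disjoint (nb N W) X := by
  obtain ⟨V₁, hV₁, hcap⟩ := exists_captures_heights (N₀ := N) (V₀ := V)
    fun h _ U _ => exists_decides X h U
  by_cases hrej : Rejects X N V₁
  · obtain ⟨W, hW, hWX⟩ := hrej.exists_forall_heights hcap
    refine ⟨W, nb_subset_nb hV₁ hW, Or.inr (Set.disjoint_left.2 fun U hU hUX => ?_)⟩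
    obtain ⟨M, hM⟩ := hX U hUX
    obtain ⟨h, hh, hMh⟩ := exists_mem_heights_ge N M U
    exact hWX U hU h hh U (self_mem_nb h U) ((nb_antitone U hMh).trans hM)
  · obtain ⟨U, hU, hUX⟩ : ∃ U ∈ nb N V₁, nb N U ⊆ X := by simpa only [Rejects, not_forall, not_not,
      exists_prop] using hrej
    exact ⟨U, nb_subset_nb hV₁ hU, Or.inl hUX⟩

theorem exists_nb_subset_of_isOpen_of_dense (hX : IsOpen X) (hdense : Dense X) (N : ℕ) (V : P) :
    ∃ W ∈ nb N V, nb N W ⊆ X := by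
  obtain ⟨W, hW, hWX | hWX⟩ := exists_nb_subset_or_disjoint_of_isOpen hX N V
  · exact ⟨W, hW, hWX⟩
  · exact absurd hWX (Set.not_disjoint_iff_nonempty_inter.2
      (hdense.inter_open_nonempty _ (isOpen_nb N W) ⟨W, self_mem_nb N W⟩))

theorem exists_disjoint_of_isMeagre (hX : IsMeagre X) (N : ℕ) (V : P) :
    ∃ W ∈ nb N V, Disjoint (nb N W) X := by
  obtain ⟨S, hopen, hdense, hcount, hSX⟩ := mem_residual_iff.1 hX
  obtain ⟨f, hf⟩ := Set.countable_iff_exists_injOn.1 hcount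
  obtain ⟨W, hW, hΨ⟩ := exists_forall_le_forall_heights (N₀ := N) (V₀ := V)
    (Ψ := fun h U => nb h U ⊆ ⋂₀ {D ∈ S | f D ≤ h})
    (fun hU hΨ => (nb_subset_nb hU).trans hΨ) fun h _ U _ => by
      have hfin : {D ∈ S | f D ≤ h}.Finite := Set.Finite.of_finite_image
        ((Set.finite_Iic h).subset (Set.image_subset_iff.2 fun D hD => hD.2))
        (hf.mono fun D hD => hD.1)
      exact exists_nb_subset_of_isOpen_of_dense (hfin.isOpen_sInter fun D hD => hopen D hD.1)
        (hfin.dense_sInter (fun D hD => hopen D hD.1) fun D hD => hdense D hD.1) h U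
  refine ⟨W, hW, Set.disjoint_left.2 fun U hU hUX => hSX (fun D hD => ?_) hUX⟩
  obtain ⟨h, hh, hDh⟩ := exists_mem_heights_ge N (f D) U
  exact hΨ U hU.1 h hh (self_mem_nb h U) D ⟨hD, hDh⟩

theorem exists_nb_subset_or_disjoint_symmDiff {Y : Set P} (hX : IsOpen X) (hY : IsMeagre Y) (N : ℕ)
    (V : P) : ∃ W ∈ nb N V, nb N W ⊆ symmDiff X Y ∨ Disjoint (nb N W) (symmDiff X Y) := by
  obtain ⟨U, hU, hUY⟩ := exists_disjoint_of_isMeagre hY N V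
  obtain ⟨W, hW, hWX⟩ := exists_nb_subset_or_disjoint_of_isOpen hX N U
  have hWY : Disjoint (nb N W) Y := hUY.mono_left (nb_subset_nb hW)
  refine ⟨W, nb_subset_nb hU hW, hWX.imp (fun h => ?_) fun h => ?_⟩
  · exact Set.subset_union_of_subset_left (Set.subset_sdiff.2 ⟨h, hWY⟩) _
  · exact (h.sup_right hWY).mono_right symmDiff_le_sup

end EllentuckOrder

end CombinatorialForcing

section Transfer

open TruncatedOrder

variable {R α P : Type*} [EllentuckOrder P] {le : R → R → Prop} {r : ℕ → R → α} {e : R ≃ P}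

attribute [local instance] ellentuckTopology

/-- The quasi-order `le` is that of `P`, and the approximations `r n A` correspond to truncations
at a cofinal set of heights. -/
structure IsTruncationModel (le : R → R → Prop) (r : ℕ → R → α) (e : R ≃ P) : Prop where
  le_iff : ∀ A B, le A B ↔ e A ≤ e B
  exists_approx_iff : ∀ n A, ∃ N, ∀ B, (∃ m, r m B = r n A) ↔ agree N (e B) (e A)
  exists_agree_of_approx : ∀ N A, ∃ n, ∀ B, (∃ m, r m B = r n A) → agree N (e B) (e A)

namespace IsTruncationModel

theorem exists_ellSet_eq (H : IsTruncationModel le r e) {a : α} {A C : R}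
    (hC : C ∈ EllSet le r a A) :
    ∃ N, ∀ B, e B ∈ nb N (e C) → B ∈ EllSet le r a A ∧ EllSet le r a B = e ⁻¹' nb N (e B) := by
  obtain ⟨hCA, n, rfl⟩ := hC
  obtain ⟨N, hN⟩ := H.exists_approx_iff n C
  refine ⟨N, fun B hB => ⟨⟨?_, (hN B).2 hB.2⟩, Set.ext fun D => ?_⟩⟩
  · exact (H.le_iff B A).2 (hB.1.trans ((H.le_iff C A).1 hCA))
  · refine and_congr (H.le_iff D B) ((hN D).trans ?_)
    exact ⟨fun hD => agree_trans hD (agree_symm hB.2), fun hD => agree_trans hD hB.2⟩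

theorem isHomeomorph_symm (H : IsTruncationModel le r e) :
    @IsHomeomorph P R _ (EllTop le r) e.symm := by
  let _ : TopologicalSpace R := EllTop le r
  refine ⟨continuous_generateFrom_iff.2 ?_, fun X hX => ?_, e.symm.bijective⟩
  · rintro _ ⟨a, A, rfl⟩ V hV
    obtain ⟨N, hN⟩ := H.exists_ellSet_eq hV
    rw [e.apply_symm_apply] at hN
    exact ⟨N, fun U hU => (hN (e.symm U) (by rwa [e.apply_symm_apply])).1⟩
  · rw [e.symm.image_eq_preimage_symm, e.symm_symm]
    refine isOpen_iff_forall_mem_open.2 fun A hA => ?_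
    obtain ⟨N, hN⟩ := hX (e A) hA
    obtain ⟨n, hn⟩ := H.exists_agree_of_approx N A
    refine ⟨EllSet le r (r n A) A, fun B hB => ?_,
      TopologicalSpace.isOpen_generateFrom_of_mem ⟨_, _, rfl⟩, ?_⟩
    · exact hN ⟨(H.le_iff B A).1 hB.1, hn B hB.2⟩
    · exact ⟨(H.le_iff A A).2 le_rfl, n, rfl⟩

theorem isTopRamseySpace (H : IsTruncationModel le r e) : IsTopRamseySpace le r := by
  let _ : TopologicalSpace R := EllTop le r
  have hmeagre {M : Set R} (hM : IsMeagre M) : IsMeagre (e.symm ⁻¹' M) :=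
    hM.preimage_of_isOpenMap H.isHomeomorph_symm.continuous H.isHomeomorph_symm.isOpenMap
  refine ⟨?_, fun M hM a A ⟨C, hC⟩ => ?_⟩
  · rintro _ ⟨U, M, hU, hM, rfl⟩ a A ⟨C, hC⟩
    obtain ⟨N, hN⟩ := H.exists_ellSet_eq hC
    obtain ⟨W, hW, hWX⟩ := EllentuckOrder.exists_nb_subset_or_disjoint_symmDiff
      (hU.preimage H.isHomeomorph_symm.continuous) (hmeagre hM) N (e C)
    obtain ⟨B, rfl⟩ := e.surjective W
    obtain ⟨hB, hBN⟩ := hN B hW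
    refine ⟨B, hB, ?_⟩
    rw [hBN, ← e.preimage_symm_preimage (symmDiff U M)]
    exact hWX.imp (fun h => Set.preimage_mono h) fun h => (h.preimage e).inter_eq
  · obtain ⟨N, hN⟩ := H.exists_ellSet_eq hC
    obtain ⟨W, hW, hWM⟩ := EllentuckOrder.exists_disjoint_of_isMeagre (hmeagre hM) N (e C)
    obtain ⟨B, rfl⟩ := e.surjective W
    obtain ⟨hB, hBN⟩ := hN B hW
    refine ⟨B, hB, ?_⟩
    rw [hBN, ← e.preimage_symm_preimage M]
    exact (hWM.preimage e).inter_eq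

end IsTruncationModel

end Transfer

section ClosedSubmodules

variable {R E : Type*} [Ring R] [AddCommGroup E] [Module R E] [TopologicalSpace E]
  [IsTopologicalAddGroup E] [CompactSpace E]

theorem isClosed_sup [T2Space E] {U V : Submodule R E} (hU : IsClosed (U : Set E))
    (hV : IsClosed (V : Set E)) : IsClosed ((U ⊔ V : Submodule R E) : Set E) := by
  rw [Submodule.coe_sup]
  exact (hU.isCompact.add hV.isCompact).isClosed

theorem iInf_sup_eq_of_isClosed {X : ℕ → Submodule R E} (hX : Antitone X)
    (hXc : ∀ k, IsClosed (X k : Set E)) {T : Submodule R E} (hT : IsClosed (T : Set E)) :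
    ⨅ k, (X k ⊔ T) = (⨅ k, X k) ⊔ T := by
  refine le_antisymm (fun x hx => ?_)
    (le_iInf fun k => sup_le_sup_right (iInf_le X k) T)
  let K (k : ℕ) : Set E := (T : Set E) ∩ (x - ·) ⁻¹' X k
  have hKc (k : ℕ) : IsClosed (K k) :=
    hT.inter ((hXc k).preimage (continuous_const.sub continuous_id))
  obtain ⟨t, ht⟩ : (⋂ k, K k).Nonempty := by
    refine IsCompact.nonempty_iInter_of_sequence_nonempty_isCompact_isClosed K
      (fun k t ht => ⟨ht.1, hX k.le_succ ht.2⟩) (fun k => ?_) (hKc 0).isCompact hKc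
    obtain ⟨y, hy, t, ht, rfl⟩ := Submodule.mem_sup.1 (Submodule.mem_iInf _ |>.1 hx k)
    exact ⟨t, ht, by simpa using hy⟩
  rw [Set.mem_iInter] at ht
  exact Submodule.mem_sup.2 ⟨x - t, (Submodule.mem_iInf _).2 fun k => (ht k).2, t, (ht 0).1,
    sub_add_cancel x t⟩

end ClosedSubmodules

section Pivots

variable {F : Type*} [Field F] {U V : Submodule F (ℕ → F)} {N N' M : ℕ} {x : ℕ → F}

/-- The sequences that vanish before `N`. Two subspaces `U` and `V` have the same projection to the
first `N` coordinates if and only if `U ⊔ tail F N = V ⊔ tail F N`. -/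
def tail (F : Type*) [Field F] (N : ℕ) : Submodule F (ℕ → F) :=
  Submodule.pi (Set.Iio N) fun _ => ⊥

theorem mem_tail : x ∈ tail F N ↔ ∀ i < N, x i = 0 := Iff.rfl

theorem tail_antitone : Antitone (tail F) := fun _ _ hNM _ hx i hi => hx i (hi.trans_le hNM)

theorem tail_zero : tail F 0 = ⊤ := top_le_iff.1 fun _ _ _ hi => absurd hi (Nat.not_lt_zero _)

theorem mem_tail_succ : x ∈ tail F (N + 1) ↔ x ∈ tail F N ∧ x N = 0 := by
  simp only [mem_tail, Nat.forall_lt_succ_right]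

/-- The projection to the first `N` coordinates. -/
def trunc (F : Type*) [Field F] (N : ℕ) : (ℕ → F) →ₗ[F] (Fin N → F) :=
  LinearMap.funLeft F F Fin.val

theorem ker_trunc (N : ℕ) : LinearMap.ker (trunc F N) = tail F N := by
  ext x
  exact ⟨fun hx i hi => congrFun hx ⟨i, hi⟩, fun hx => funext fun i => hx i i.2⟩

theorem comap_map_trunc (U : Submodule F (ℕ → F)) (N : ℕ) :
    (U.map (trunc F N)).comap (trunc F N) = U ⊔ tail F N := by
  rw [Submodule.comap_map_eq, ker_trunc]

theorem isClosed_tail [TopologicalSpace F] [T1Space F] (N : ℕ) :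
    IsClosed (tail F N : Set (ℕ → F)) :=
  isClosed_set_pi fun _ _ => isClosed_singleton

theorem isClosed_sup_tail [TopologicalSpace F] [DiscreteTopology F] (U : Submodule F (ℕ → F))
    (N : ℕ) : IsClosed ((U ⊔ tail F N : Submodule F (ℕ → F)) : Set (ℕ → F)) := by
  have hcont : Continuous (trunc F N) := continuous_pi fun i => continuous_apply i.1
  rw [← comap_map_trunc]
  exact (isClosed_discrete (U.map (trunc F N) : Set (Fin N → F))).preimage hcont

theorem mem_of_forall_mem_sup_tail [TopologicalSpace F] (hU : IsClosed (U : Set (ℕ → F)))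
    (hx : ∀ N, x ∈ U ⊔ tail F N) : x ∈ U := by
  choose u hu t ht hut using fun N => Submodule.mem_sup.1 (hx N)
  have hlim : Filter.Tendsto u Filter.atTop (𝓝 x) := tendsto_pi_nhds.2 fun i => by
    refine tendsto_const_nhds.congr' ?_
    filter_upwards [Filter.eventually_gt_atTop i] with N hN
    rw [← hut N, Pi.add_apply, ht N i hN, add_zero]
  exact hU.mem_of_tendsto hlim (Filter.Eventually.of_forall hu)

/-- The positions of the first nonzero entries of elements of `V`. -/
def pivots (V : Submodule F (ℕ → F)) : Set ℕ := {M | ∃ x ∈ V ⊓ tail F M, x M ≠ 0}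

theorem pivots_mono : Monotone (pivots (F := F)) := fun _ _ hUV _ ⟨x, hx, hxM⟩ =>
  ⟨x, ⟨hUV hx.1, hx.2⟩, hxM⟩

theorem mem_pivots_of_le_sup_tail (hVU : V ≤ U ⊔ tail F (M + 1)) (hM : M ∈ pivots V) :
    M ∈ pivots U := by
  obtain ⟨x, ⟨hxV, hxM⟩, hx⟩ := hM
  obtain ⟨u, hu, t, ht, rfl⟩ := Submodule.mem_sup.1 (hVU hxV)
  have heq {i : ℕ} (hi : i ≤ M) : u i = (u + t) i := by
    rw [Pi.add_apply, ht i (Nat.lt_succ_of_le hi), add_zero]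
  exact ⟨u, ⟨hu, fun i hi => (heq (le_of_lt hi)).trans (hxM i hi)⟩, by rwa [heq le_rfl]⟩

theorem mem_tail_of_forall_pivots (hx : x ∈ V ⊓ tail F N)
    (hpivot : ∀ M ∈ pivots V, N ≤ M → M < N' → x M = 0) : x ∈ tail F N' := by
  intro i hi
  induction i using Nat.strong_induction_on with
  | _ i ih =>
    by_contra hxi
    have hiV : i ∈ pivots V := ⟨x, ⟨hx.1, fun j hj => ih j hj ((Set.mem_Iio.1 hj).trans hi)⟩, hxi⟩
    exact hxi (hpivot i hiV (not_lt.1 fun hiN => hxi (hx.2 i hiN)) hi)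

theorem le_sup_tail (hUV : U ≤ V) (hN : V ≤ U ⊔ tail F N)
    (hpivot : ∀ M ∈ pivots V, N ≤ M → M < N' → M ∈ pivots U) : V ≤ U ⊔ tail F N' := by
  suffices hstep : ∀ M ≤ N', V ≤ U ⊔ tail F M from hstep N' le_rfl
  intro M
  induction M with
  | zero => exact fun _ => hN.trans (sup_le_sup_left (tail_antitone N.zero_le) U)
  | succ M ih =>
    intro hMN' x hx
    obtain hMN | hNM := lt_or_ge M N
    · exact sup_le_sup_left (tail_antitone hMN) U (hN hx)
    obtain ⟨u, hu, t, ht, rfl⟩ := Submodule.mem_sup.1 (ih (Nat.le_of_succ_le hMN') hx)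
    refine Submodule.add_mem _ (Submodule.mem_sup_left hu) ?_
    by_cases htM : t M = 0
    · exact Submodule.mem_sup_right (mem_tail_succ.2 ⟨ht, htM⟩)
    · have htV : t ∈ V := (Submodule.add_mem_iff_right V (hUV hu)).1 hx
      obtain ⟨y, ⟨hyU, hy⟩, hyM⟩ := hpivot M ⟨t, ⟨htV, ht⟩, htM⟩ hNM hMN'
      refine Submodule.mem_sup.2 ⟨(t M / y M) • y, U.smul_mem _ hyU, t - (t M / y M) • y,
        mem_tail_succ.2 ⟨sub_mem ht (Submodule.smul_mem _ _ hy), ?_⟩, add_sub_cancel _ t⟩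
      rw [Pi.sub_apply, Pi.smul_apply, smul_eq_mul, div_mul_cancel₀ _ hyM, sub_self]

theorem eq_of_le_of_pivots_subset [TopologicalSpace F] (hU : IsClosed (U : Set (ℕ → F)))
    (hUV : U ≤ V) (hpivot : pivots V ⊆ pivots U) : U = V := by
  refine hUV.antisymm fun x hx => mem_of_forall_mem_sup_tail hU fun N => ?_
  exact le_sup_tail hUV (tail_zero (F := F).symm ▸ le_top.trans le_sup_right)
    (fun M hM _ _ => hpivot hM) hx

theorem exists_mem_comp_eq [TopologicalSpace F] [CompactSpace F] [T2Space F] {q : ℕ → ℕ}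
    (hV : IsClosed (V : Set (ℕ → F))) (hq : StrictMono q) (hqV : ∀ i, q i ∈ pivots V ∩ Set.Ici N)
    {v : ℕ → F} (hv : v ∈ V) (t : ℕ → F) : ∃ x ∈ V, x - v ∈ tail F N ∧ x ∘ q = t := by
  let Q : (ℕ → F) →ₗ[F] (ℕ → F) := LinearMap.funLeft F F q
  have htop : (V ⊓ tail F N).map Q = ⊤ := by
    refine eq_of_le_of_pivots_subset ?_ le_top fun i _ => ?_
    · have hcont : Continuous Q := continuous_pi fun i => continuous_apply (q i)
      exact (((hV.inter (isClosed_tail N)).isCompact).image hcont).isClosed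
    · obtain ⟨⟨x, ⟨hxV, hx⟩, hxi⟩, hNq⟩ := hqV i
      exact ⟨Q x, ⟨Submodule.mem_map_of_mem ⟨hxV, tail_antitone hNq hx⟩,
        fun j hj => hx (q j) (hq hj)⟩, hxi⟩
  obtain ⟨y, ⟨hyV, hy⟩, hyt⟩ : t - Q v ∈ (V ⊓ tail F N).map Q := htop ▸ Submodule.mem_top
  refine ⟨y + v, add_mem hyV hv, by rwa [add_sub_cancel_right], ?_⟩
  exact (map_add Q y v).trans (hyt.symm ▸ sub_add_cancel t (Q v))

end Pivots

section LargeSubspaces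

theorem exists_amalgam {L : Type*} [Lattice L] [BoundedOrder L] [IsModularLattice L]
    [ComplementedLattice L] {v v' : L} (hv : v' ≤ v) (t : L) :
    ∃ c ≤ v, c ⊓ t = ⊥ ∧ v' ⊔ c ⊔ t = v ⊔ t ∧ ∀ u ≤ v' ⊔ c, u ≤ v' ⊔ t → u ≤ v' := by
  obtain ⟨d, hd⟩ := exists_isCompl (v' ⊔ v ⊓ t)
  have hsup : v' ⊔ v ⊓ t ⊔ d ⊓ v = v := by
    rw [← sup_inf_assoc_of_le d (sup_le hv inf_le_left), hd.sup_eq_top, top_inf_eq]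
  refine ⟨d ⊓ v, inf_le_right, ?_, le_antisymm ?_ ?_, fun u huc hut => ?_⟩
  · exact (hd.disjoint.mono (le_sup_right.trans' (inf_le_inf_right t inf_le_right))
      (inf_le_left.trans inf_le_left)).eq_bot_of_self
  · exact sup_le_sup_right (sup_le hv inf_le_right) t
  · refine sup_le (hsup.ge.trans ?_) le_sup_right
    exact sup_le (sup_le (le_sup_left.trans le_sup_left) (inf_le_right.trans le_sup_right))
      (le_sup_right.trans le_sup_left)
  · have hle : d ⊓ v ⊓ (v' ⊔ t) ≤ ⊥ := hd.symm.disjoint (inf_le_left.trans inf_le_left) <| by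
      rw [inf_comm v t, ← sup_inf_assoc_of_le t hv]
      exact le_inf inf_le_right (inf_le_left.trans inf_le_right)
    calc u ≤ (v' ⊔ d ⊓ v) ⊓ (v' ⊔ t) := le_inf huc hut
      _ = v' ⊔ d ⊓ v ⊓ (v' ⊔ t) := sup_inf_assoc_of_le _ le_sup_left
      _ ≤ v' := sup_le le_rfl (hle.trans bot_le)

open TruncatedOrder

variable {F : Type*} [Field F] [TopologicalSpace F]

/-- The closed infinite-dimensional subspaces of `F^ℕ`. When `F` is finite and discrete, these are
the closed subspaces with infinitely many pivots. -/
abbrev LargeSubspace (F : Type*) [Field F] [TopologicalSpace F] : Type _ :=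
  {V : Submodule F (ℕ → F) // IsClosed (V : Set (ℕ → F)) ∧ (pivots V).Infinite}

instance : TruncatedOrder (LargeSubspace F) where
  agree N := Setoid.ker fun V => V.1 ⊔ tail F N
  agree_antitone N M hNM U V hUV := by
    have htail : tail F M ≤ tail F N := tail_antitone hNM
    have hsup (W : LargeSubspace F) : W.1 ⊔ tail F M ⊔ tail F N = W.1 ⊔ tail F N := by
      rw [sup_assoc, sup_eq_right.2 htail]
    exact (hsup U).symm.trans ((congrArg (· ⊔ tail F N) hUV).trans (hsup V))
  levels V := pivots V.1
  levels_mono _ _ hUV := pivots_mono hUV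
  levels_infinite V := V.2.2
  mem_levels_of_agree hUV := mem_pivots_of_le_sup_tail (le_sup_left.trans (Eq.ge hUV))

namespace LargeSubspace

variable {N : ℕ} {U V : LargeSubspace F}

theorem agree_iff : agree N U V ↔ U.1 ⊔ tail F N = V.1 ⊔ tail F N := Iff.rfl

theorem mem_nb_of_le_sup_tail (hUV : U ≤ V) (hVU : V.1 ≤ U.1 ⊔ tail F N) : U ∈ nb N V :=
  ⟨hUV, (sup_le_sup_right hUV _).antisymm (sup_le hVU le_sup_right)⟩

theorem finite_quotient_agree [Finite F] (N : ℕ) :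
    Finite (Quotient (agree (P := LargeSubspace F) N)) := by
  have hsurj : Function.Surjective (trunc F N) :=
    LinearMap.funLeft_surjective_of_injective F F _ Fin.val_injective
  have hagree : agree N = Setoid.ker fun V : LargeSubspace F => V.1.map (trunc F N) :=
    Setoid.ext fun U V => by
      rw [agree_iff, ← comap_map_trunc, ← comap_map_trunc,
        (Submodule.comap_injective_of_surjective hsurj).eq_iff]
      rfl
  rw [hagree]
  exact Finite.of_equiv _ (Setoid.quotientKerEquivRange _).symm

variable [DiscreteTopology F] [Finite F]

theorem exists_fusion (X : ℕ → LargeSubspace F) (h : ℕ → ℕ)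
    (hX : ∀ k, X (k + 1) ∈ nb (h k) (X k))
    (hlevel : ∀ k, ∃ M ∈ levels (X (k + 1)), h k ≤ M ∧ M < h (k + 1)) :
    ∃ W, ∀ k, W ∈ nb (h k) (X k) := by
  choose M hM hhM hMh using hlevel
  have hh : StrictMono h := strictMono_nat_of_lt_succ fun k => (hhM k).trans_lt (hMh k)
  have hanti : Antitone X := antitone_nat_of_succ_le fun k => (hX k).1
  have hclosed (k : ℕ) : IsClosed ((X k).1 : Set (ℕ → F)) := (X k).2.1
  have hnb {k j : ℕ} (hkj : k ≤ j) : X j ∈ nb (h k) (X k) := by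
    induction j, hkj using Nat.le_induction with
    | base => exact self_mem_nb _ _
    | succ j hkj ih => exact nb_subset_nb ih (nb_antitone _ (hh.monotone hkj) (hX j))
  have hsup (k : ℕ) : (X k).1 ≤ (⨅ j, (X j).1) ⊔ tail F (h k) := by
    rw [← iInf_sup_eq_of_isClosed (fun _ _ hij => hanti hij) hclosed (isClosed_tail (h k))]
    refine le_iInf fun j => ?_
    obtain hjk | hkj := le_total j k
    · exact le_sup_of_le_left (hanti hjk)
    · exact le_sup_left.trans (hnb hkj).2.ge
  refine ⟨⟨⨅ j, (X j).1, ?_, Set.infinite_of_forall_exists_gt fun a => ⟨M (a + 1), ?_, ?_⟩⟩,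
    fun k => mem_nb_of_le_sup_tail (iInf_le (fun j => (X j).1) k) (hsup k)⟩
  · rw [Submodule.coe_iInf]
    exact isClosed_iInter hclosed
  · refine mem_pivots_of_le_sup_tail ((hsup (a + 2)).trans (sup_le_sup_left ?_ _)) (hM (a + 1))
    exact tail_antitone (hMh (a + 1))
  · exact (Nat.lt_succ_self a).trans_le (hh.le_apply.trans (hhM (a + 1)))

theorem exists_amalgam_mem_nb (N : ℕ) {V V' : LargeSubspace F} (hV : V' ≤ V) :
    ∃ W ∈ nb N V, ∀ U ≤ W, agree N U V' → U ≤ V' := by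
  obtain ⟨C, hCV, hC, hsup, hle⟩ := exists_amalgam (Subtype.coe_le_coe.2 hV) (tail F N)
  have hfin : (C : Set (ℕ → F)).Finite := by
    have hinj : Function.Injective fun (x : C) (i : Fin N) => x.1 i := fun x y hxy =>
      Subtype.ext <| sub_eq_zero.1 <| (Submodule.mem_bot F).1 <| hC ▸
        ⟨sub_mem x.2 y.2, fun i hi => sub_eq_zero.2 (congrFun hxy ⟨i, hi⟩)⟩
    exact Finite.of_injective _ hinj
  refine ⟨⟨V'.1 ⊔ C, isClosed_sup V'.2.1 hfin.isClosed, V'.2.2.mono (pivots_mono le_sup_left)⟩,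
    mem_nb_of_le_sup_tail (sup_le hV hCV) (le_sup_left.trans hsup.ge), fun U hU hUV' => ?_⟩
  exact hle U.1 hU (le_sup_left.trans (agree_iff.1 hUV').le)

end LargeSubspace

end LargeSubspaces

section Pigeonhole

open TruncatedOrder

theorem exists_functional_comp_eqOn {K E E' : Type*} [Field K] [AddCommGroup E] [Module K E]
    [AddCommGroup E'] [Module K E'] {U : Submodule K E} {f : E →ₗ[K] E'} {φ : E →ₗ[K] K}
    (h : U ⊓ LinearMap.ker f ≤ LinearMap.ker φ) : ∃ g : E' →ₗ[K] K, ∀ x ∈ U, g (f x) = φ x := by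
  have hφ : φ.domRestrict U ∈ LinearMap.range (f.domRestrict U).dualMap := by
    rw [LinearMap.range_dualMap_eq_dualAnnihilator_ker, Submodule.mem_dualAnnihilator]
    exact fun x hx => h ⟨x.2, hx⟩
  obtain ⟨g, hg⟩ := hφ
  exact ⟨g, fun x hx => LinearMap.congr_fun hg ⟨x, hx⟩⟩

/-- The variable word that starts with the letters of `w` and continues with distinct variables. -/
def VariableWord.ofList {A : Type*} (w : List A) : VariableWord A where
  letter i := if h : i < w.length then Sum.inl w[i] else Sum.inr i
  first_occurrence i k hik := by
    split_ifs at hik with h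
    obtain rfl := Sum.inr.inj hik
    exact ⟨le_rfl, dif_neg h⟩
  infinite_free := (Set.Ici_infinite w.length).mono fun _ hk => dif_neg (not_lt.2 hk)

theorem VariableWord.ofList_eval_letter {A : Type*} (z : VariableWord A) (g : ℕ → A) (k i : ℕ) :
    (ofList (z.eval g k)).letter i =
      if i < k then Sum.inl (Sum.elim id g (z.letter i)) else Sum.inr i := by
  simp only [ofList, eval, List.length_map, List.length_range, List.getElem_map,
    List.getElem_range, dite_eq_ite]

variable {F : Type*} [Field F] [TopologicalSpace F] {N M : ℕ} {U V : LargeSubspace F}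
  {z : VariableWord ((Fin N → F) →ₗ[F] F)} {x : ℕ → F}

namespace LargeSubspace

/-- The value that the letter `l` prescribes for the entry of a sequence at a level: a functional
is applied to the first `N` coordinates, and a variable named `k` repeats the entry at the `k`-th
level of `V` from `N` on. -/
noncomputable def letterValue (V : LargeSubspace F) :
    ((Fin N → F) →ₗ[F] F) ⊕ ℕ → (ℕ → F) →ₗ[F] F :=
  Sum.elim (· ∘ₗ trunc F N) fun k => LinearMap.proj (enumLevels N V k)

/-- The sequences in `V` whose entries at the levels of `V` from `N` on are prescribed by the
letters of `z`. -/
noncomputable def wordSubmodule (V : LargeSubspace F) (z : VariableWord ((Fin N → F) →ₗ[F] F)) :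
    Submodule F (ℕ → F) :=
  V.1 ⊓ ⨅ i, LinearMap.ker (LinearMap.proj (enumLevels N V i) - V.letterValue (z.letter i))

theorem mem_wordSubmodule : x ∈ V.wordSubmodule z ↔
    x ∈ V.1 ∧ ∀ i, x (enumLevels N V i) = V.letterValue (z.letter i) x := by
  simp only [wordSubmodule, Submodule.mem_inf, Submodule.mem_iInf, LinearMap.mem_ker,
    LinearMap.sub_apply, LinearMap.proj_apply, sub_eq_zero]

theorem exists_free_of_mem_pivots (hU : U.1 ≤ V.wordSubmodule z) (hM : M ∈ levels U)
    (hNM : N ≤ M) : ∃ k, z.letter k = Sum.inr k ∧ enumLevels N V k = M := by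
  obtain ⟨x, ⟨hxU, hx⟩, hxM⟩ := hM
  obtain ⟨hxV, hletter⟩ := mem_wordSubmodule.1 (hU hxU)
  obtain ⟨i, rfl⟩ : M ∈ Set.range (enumLevels N V) :=
    range_enumLevels N V ▸ ⟨⟨x, ⟨hxV, hx⟩, hxM⟩, hNM⟩
  rw [hletter] at hxM
  rcases hi : z.letter i with a | k
  · refine absurd ?_ hxM
    have htrunc : trunc F N x = 0 := (ker_trunc N).ge (tail_antitone hNM hx)
    rw [hi]
    exact (congrArg a htrunc).trans (map_zero a)
  · obtain ⟨hki, hk⟩ := z.first_occurrence i k hi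
    obtain hlt | rfl := hki.lt_or_eq
    · rw [hi] at hxM
      exact absurd (hx _ (enumLevels_strictMono N V hlt)) hxM
    · exact ⟨k, hk, rfl⟩

variable [DiscreteTopology F]

theorem isClosed_wordSubmodule : IsClosed (V.wordSubmodule z : Set (ℕ → F)) := by
  have hcont (l : ((Fin N → F) →ₗ[F] F) ⊕ ℕ) : Continuous (V.letterValue l) := by
    cases l with
    | inl a => exact a.continuous_on_pi.comp (continuous_pi fun i => continuous_apply _)
    | inr k => exact continuous_apply _
  rw [wordSubmodule, Submodule.coe_inf, Submodule.coe_iInf]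
  exact V.2.1.inter <| isClosed_iInter fun i =>
    isClosed_singleton.preimage ((continuous_apply _).sub (hcont _))

variable [Finite F]

theorem exists_mem_wordSubmodule (V : LargeSubspace F) (z : VariableWord ((Fin N → F) →ₗ[F] F))
    {v : ℕ → F} (hv : v ∈ V.1) (t : ℕ → F) : ∃ x ∈ V.wordSubmodule z, x - v ∈ tail F N ∧
      x ∘ enumLevels N V = fun i => Sum.elim (· (trunc F N v)) t (z.letter i) := by
  obtain ⟨x, hx, hxv, hxt⟩ := exists_mem_comp_eq V.2.1 (enumLevels_strictMono N V)
    (enumLevels_mem N V) hv fun i => Sum.elim (· (trunc F N v)) t (z.letter i)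
  have hxt' (i : ℕ) := congrFun hxt i
  refine ⟨x, mem_wordSubmodule.2 ⟨hx, fun i => (hxt' i).trans ?_⟩, hxv, hxt⟩
  rcases hi : z.letter i with a | k
  · have htrunc : trunc F N x = trunc F N v :=
      sub_eq_zero.1 ((map_sub _ x v).symm.trans ((ker_trunc N).ge hxv))
    exact congrArg a htrunc.symm
  · have hk := hxt' k
    rw [(z.first_occurrence i k hi).2] at hk
    exact hk.symm

theorem le_wordSubmodule_sup_tail (V : LargeSubspace F)
    (z : VariableWord ((Fin N → F) →ₗ[F] F)) : V.1 ≤ V.wordSubmodule z ⊔ tail F N := fun v hv =>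
  let ⟨x, hx, hxv, _⟩ := exists_mem_wordSubmodule V z hv 0
  Submodule.mem_sup.2 ⟨x, hx, v - x, neg_sub x v ▸ neg_mem hxv, add_sub_cancel x v⟩

theorem enumLevels_mem_pivots_wordSubmodule {k : ℕ} (hk : z.letter k = Sum.inr k) :
    enumLevels N V k ∈ pivots (V.wordSubmodule z) := by
  obtain ⟨x, hx, hxN, hxt⟩ := exists_mem_wordSubmodule V z (zero_mem V.1) (Pi.single k 1)
  have hxt' (i : ℕ) := congrFun hxt i
  rw [sub_zero] at hxN
  refine ⟨x, ⟨hx, mem_tail_of_forall_pivots ⟨(mem_wordSubmodule.1 hx).1, hxN⟩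
    fun M hM hNM hMk => ?_⟩, ?_⟩
  · obtain ⟨i, rfl⟩ := (range_enumLevels N V).ge ⟨hM, hNM⟩
    refine (hxt' i).trans ?_
    rcases hi : z.letter i with a | l
    · exact (congrArg a (map_zero _)).trans (map_zero a)
    · have hik := (enumLevels_strictMono N V).lt_iff_lt.1 hMk
      exact Pi.single_eq_of_ne ((z.first_occurrence i l hi).1.trans_lt hik).ne 1
  · have hxk := hxt' k
    rw [hk] at hxk
    exact ne_of_eq_of_ne (hxk.trans (Pi.single_eq_same k 1)) one_ne_zero

theorem infinite_pivots_wordSubmodule (V : LargeSubspace F)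
    (z : VariableWord ((Fin N → F) →ₗ[F] F)) : (pivots (V.wordSubmodule z)).Infinite := by
  refine (z.infinite_free.image (f := enumLevels N V)
    (enumLevels_strictMono N V).injective.injOn).mono ?_
  rintro _ ⟨k, hk, rfl⟩
  exact enumLevels_mem_pivots_wordSubmodule hk

/-- `V.wordSubmodule z` as an element of the order to which the pigeonhole principle applies. -/
noncomputable def wordSubspace (V : LargeSubspace F) (z : VariableWord ((Fin N → F) →ₗ[F] F)) :
    LargeSubspace F :=
  ⟨V.wordSubmodule z, isClosed_wordSubmodule, infinite_pivots_wordSubmodule V z⟩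

theorem wordSubspace_mem_nb (V : LargeSubspace F) (z : VariableWord ((Fin N → F) →ₗ[F] F)) :
    V.wordSubspace z ∈ nb N V :=
  mem_nb_of_le_sup_tail (fun _ hx => (mem_wordSubmodule.1 hx).1) (le_wordSubmodule_sup_tail V z)

theorem exists_word_functionals (hU : U ∈ nb N (V.wordSubspace z)) :
    ∃ g k, U ≤ V.wordSubspace (VariableWord.ofList (z.eval g k)) ∧ z.letter k = Sum.inr k ∧
      enumLevels N V k = nextLevel N U := by
  obtain ⟨k, hk, hkM⟩ :=
    exists_free_of_mem_pivots hU.1 (nextLevel_mem N U).1 (nextLevel_mem N U).2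
  -- An element of `U` that vanishes before `N` vanishes before the next level of `U`, so entries
  -- of elements of `U` there are determined by their first `N` coordinates.
  have hfunctional (i : ℕ) (hi : i < k) : ∃ g : (Fin N → F) →ₗ[F] F,
      ∀ x ∈ U.1, g (trunc F N x) = x (enumLevels N V i) := by
    refine exists_functional_comp_eqOn (K := F)
      (φ := LinearMap.proj (φ := fun _ : ℕ => F) (enumLevels N V i)) fun x hx => ?_
    exact mem_tail_of_forall_pivots (ker_trunc (F := F) N ▸ hx)
      (fun M hM hNM hlt => absurd hlt (nextLevel_le hM hNM).not_gt) _
      ((enumLevels_strictMono N V hi).trans_eq hkM)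
  choose! g hg using hfunctional
  refine ⟨g, k, fun x hx => mem_wordSubmodule.2 ?_, hk, hkM⟩
  obtain ⟨hxV, hletter⟩ := mem_wordSubmodule.1 (hU.1 hx)
  refine ⟨hxV, fun i => ?_⟩
  rw [VariableWord.ofList_eval_letter]
  split_ifs with hi
  · have hxi := hletter i
    rcases hl : z.letter i with a | l
    · rwa [hl] at hxi
    · rw [hl] at hxi
      exact hxi.trans (hg l ((z.first_occurrence i l hl).1.trans_lt hi) x hx).symm
  · rfl

theorem exists_agree_wordSubspace_ofList (hU : U ∈ nb N (V.wordSubspace z)) :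
    ∃ g k, z.letter k = Sum.inr k ∧
      agree (nextLevel N U + 1) U (V.wordSubspace (VariableWord.ofList (z.eval g k))) := by
  obtain ⟨g, k, hUT, hk, hkM⟩ := exists_word_functionals hU
  refine ⟨g, k, hk, (mem_nb_of_le_sup_tail hUT (le_sup_tail (N := N) hUT ?_
    fun L hL hNL hLM => ?_)).2⟩
  · have hUV : agree N U V := agree_trans hU.2 (wordSubspace_mem_nb V z).2
    exact le_trans (b := V.1) (wordSubspace_mem_nb V _).1 (le_sup_left.trans hUV.ge)
  · obtain ⟨i, hi, rfl⟩ := exists_free_of_mem_pivots le_rfl hL hNL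
    rw [VariableWord.ofList_eval_letter] at hi
    have hki : k ≤ i := not_lt.1 fun hlt => Sum.inl_ne_inr ((if_pos hlt).symm.trans hi)
    have hle : enumLevels N V i ≤ nextLevel N U := Nat.lt_succ_iff.1 hLM
    rw [hle.antisymm (hkM ▸ (enumLevels_strictMono N V).monotone hki)]
    exact (nextLevel_mem N U).1

theorem exists_mem_nb_forall_or_forall_not (N : ℕ) (V : LargeSubspace F)
    (c : LargeSubspace F → Prop) (hc : ∀ U U', agree (nextLevel N U + 1) U U' → (c U ↔ c U')) :
    ∃ V' ∈ nb N V, (∀ U ∈ nb N V', c U) ∨ ∀ U ∈ nb N V', ¬ c U := by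
  have : Finite ((Fin N → F) →ₗ[F] F) := Finite.of_injective _ DFunLike.coe_injective
  obtain ⟨z, p, hz⟩ := carlson_simpson fun w : List ((Fin N → F) →ₗ[F] F) =>
    c (V.wordSubspace (VariableWord.ofList w))
  have hconst {U : LargeSubspace F} (hU : U ∈ nb N (V.wordSubspace z)) : c U ↔ p := by
    obtain ⟨g, k, hk, hagree⟩ := exists_agree_wordSubspace_ofList hU
    exact (hc _ _ hagree).trans (hz g k hk).to_iff
  refine ⟨V.wordSubspace z, wordSubspace_mem_nb V z, (em p).imp ?_ ?_⟩
  · exact fun hp U hU => (hconst hU).2 hp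
  · exact fun hp U hU => mt (hconst hU).1 hp

noncomputable instance : EllentuckOrder (LargeSubspace F) where
  finite_quotient := finite_quotient_agree
  fusion := exists_fusion
  amalgam := exists_amalgam_mem_nb
  pigeonhole := exists_mem_nb_forall_or_forall_not

end LargeSubspace

end Pigeonhole

section EchelonMatrices

open TruncatedOrder

variable {F : Type} [Field F] {A B : ℕ → ℕ → F} {m n N j : ℕ}

theorem apply_eq_zero_of_lt_leadPos (hj : j < leadPos A n) : A n j = 0 :=
  not_not.1 (Nat.notMem_of_lt_sInf hj)

theorem leadPos_eq (hn : A n j ≠ 0) (hlt : ∀ i < j, A n i = 0) : leadPos A n = j :=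
  (Nat.sInf_le hn).antisymm <| not_lt.1 fun hlead =>
    Nat.sInf_mem (s := {j | A n j ≠ 0}) ⟨j, hn⟩ (hlt _ hlead)

theorem apply_leadPos (hB : B ∈ Minf F) (m n : ℕ) :
    B m (leadPos B n) = (Pi.single n 1 : ℕ → F) m := by
  obtain rfl | hmn := eq_or_ne m n
  · rw [Pi.single_eq_same, hB.2.2.1]
  · rw [Pi.single_eq_of_ne hmn, hB.2.2.2 n m hmn]

theorem mem_Minf_of_comp_eq_single {q : ℕ → ℕ} (hq : StrictMono q)
    (hB : ∀ n, B n ∘ q = Pi.single n 1) (hlead : leadPos B = q) : B ∈ Minf F := by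
  have hBq (n n' : ℕ) : B n' (leadPos B n) = (Pi.single n' 1 : ℕ → F) n :=
    hlead ▸ congrFun (hB n') n
  refine ⟨fun n => ⟨leadPos B n, ?_⟩, hlead ▸ hq, fun n => ?_, fun n n' hn => ?_⟩
  · rw [hBq, Pi.single_eq_same]
    exact one_ne_zero
  · rw [hBq, Pi.single_eq_same]
  · rw [hBq, Pi.single_eq_of_ne hn.symm]

theorem mem_range_leadPos_of_mem_span (hB : B ∈ Minf F) {x : ℕ → F}
    (hx : x ∈ Submodule.span F (Set.range B)) (hxN : x ∈ tail F N) (hN : x N ≠ 0) :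
    N ∈ Set.range (leadPos B) := by
  obtain ⟨c, rfl⟩ := Finsupp.mem_span_range_iff_exists_finsupp.1 hx
  have happly (j : ℕ) : (c.sum fun n a => a • B n) j = c.sum fun n a => a * B n j := by
    simp only [Finsupp.sum, Finset.sum_apply, Pi.smul_apply, smul_eq_mul]
  have hcoeff (n : ℕ) : (c.sum fun n a => a • B n) (leadPos B n) = c n := by
    rw [happly]
    simp only [apply_leadPos hB, Pi.single_apply, mul_ite, mul_one, mul_zero]
    simp
  rw [happly] at hN
  obtain ⟨n, -, hn⟩ := Finset.exists_ne_zero_of_sum_ne_zero hN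
  refine ⟨n, le_antisymm (not_lt.1 fun hlt => hn ?_) (not_lt.1 fun hlt => hn ?_)⟩
  · exact mul_eq_zero_of_right _ (apply_eq_zero_of_lt_leadPos hlt)
  · exact mul_eq_zero_of_left ((hcoeff n).symm.trans (hxN _ hlt)) _

section Approximations

theorem rMat_zero (B : ℕ → ℕ → F) : rMat F 0 B = ∅ :=
  Set.eq_empty_of_forall_notMem fun _ ⟨_, h, _⟩ => Nat.succ_ne_zero _ h.symm

theorem mem_rMat_succ {q : (ℕ × ℕ) × F} :
    q ∈ rMat F (m + 1) B ↔ q.1 ∈ Set.Iio m ×ˢ Set.Iio (leadPos B m) ∧ q.2 = B q.1.1 q.1.2 := by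
  simp only [rMat, Set.mem_ofPred_eq, add_left_inj, exists_eq_left', Set.mem_prod, Set.mem_Iio,
    and_assoc]

theorem image_fst_rMat_succ (m : ℕ) (B : ℕ → ℕ → F) :
    Prod.fst '' rMat F (m + 1) B = Set.Iio m ×ˢ Set.Iio (leadPos B m) := by
  ext p
  refine ⟨?_, fun hp => ⟨(p, B p.1 p.2), mem_rMat_succ.2 ⟨hp, rfl⟩, rfl⟩⟩
  rintro ⟨q, hq, rfl⟩
  exact (mem_rMat_succ.1 hq).1

theorem eq_and_leadPos_eq_of_rMat_eq (hm : 0 < m) (hlead : 0 < leadPos B m)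
    (h : rMat F n A = rMat F (m + 1) B) : n = m + 1 ∧ leadPos A m = leadPos B m := by
  have hne : (Set.Iio m ×ˢ Set.Iio (leadPos B m)).Nonempty := ⟨(0, 0), hm, hlead⟩
  have himage := congrArg (Prod.fst '' ·) h
  simp only [image_fst_rMat_succ] at himage
  cases n with
  | zero =>
    rw [rMat_zero, Set.image_empty] at himage
    exact absurd himage.symm hne.ne_empty
  | succ n =>
    rw [image_fst_rMat_succ, eq_comm, Set.prod_eq_prod_iff_of_nonempty hne, Set.Iio_inj,
      Set.Iio_inj] at himage
    obtain ⟨rfl, hlead⟩ := himage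
    exact ⟨rfl, hlead.symm⟩

theorem exists_rMat_eq_iff (hA : A ∈ Minf F) (hB : B ∈ Minf F) (hm : 0 < m) :
    (∃ n, rMat F n A = rMat F (m + 1) B) ↔ ∀ i, ∀ j < leadPos B m + 1, A i j = B i j := by
  constructor
  · rintro ⟨n, h⟩ i j hj
    obtain ⟨rfl, hlead⟩ := eq_and_leadPos_eq_of_rMat_eq hm (hm.trans_le hB.2.1.le_apply) h
    obtain hj | rfl := Nat.lt_succ_iff_lt_or_eq.1 hj
    · obtain hi | hi := lt_or_ge i m
      · exact (mem_rMat_succ.1 (h.le ((mem_rMat_succ (q := ((i, j), A i j))).2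
          ⟨⟨hi, hj.trans_eq hlead.symm⟩, rfl⟩))).2
      · rw [apply_eq_zero_of_lt_leadPos (hj.trans_le (hB.2.1.monotone hi)),
          apply_eq_zero_of_lt_leadPos (hj.trans_le (hlead.ge.trans (hA.2.1.monotone hi)))]
    · rw [apply_leadPos hB, ← hlead, apply_leadPos hA]
  · intro h
    have hlead : leadPos A m = leadPos B m := by
      refine leadPos_eq ?_ fun j hj => ?_
      · rw [h m _ (Nat.lt_succ_self _), hB.2.2.1]
        exact one_ne_zero
      · rw [h m j (Nat.lt_succ_of_lt hj), apply_eq_zero_of_lt_leadPos hj]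
    refine ⟨m + 1, Set.ext fun q => ?_⟩
    rw [mem_rMat_succ, mem_rMat_succ, hlead]
    exact and_congr_right fun hq => by rw [h _ _ (Nat.lt_succ_of_lt hq.2)]

end Approximations

variable [TopologicalSpace F] [DiscreteTopology F]

/-- The closure of the linear span of the columns of `B`. -/
def closedSpan (B : ℕ → ℕ → F) : Submodule F (ℕ → F) :=
  (Submodule.span F (Set.range B)).topologicalClosure

theorem mem_closedSpan (B : ℕ → ℕ → F) (n : ℕ) : B n ∈ closedSpan B :=
  Submodule.le_topologicalClosure _ (Submodule.subset_span ⟨n, rfl⟩)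

theorem closedSpan_le {V : Submodule F (ℕ → F)} (hV : IsClosed (V : Set (ℕ → F)))
    (hB : ∀ n, B n ∈ V) : closedSpan B ≤ V :=
  Submodule.topologicalClosure_minimal _ (Submodule.span_le.2 (Set.range_subset_iff.2 hB)) hV

theorem mle_iff_closedSpan_le : Mle F A B ↔ closedSpan A ≤ closedSpan B := by
  have htop : topCol F = Pi.topologicalSpace := by
    rw [topCol, DiscreteTopology.eq_bot (α := F)]
  rw [Mle, htop]
  exact ⟨closedSpan_le (Submodule.isClosed_topologicalClosure _),
    fun hAB n => hAB (mem_closedSpan A n)⟩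

theorem pivots_closedSpan (hB : B ∈ Minf F) : pivots (closedSpan B) = Set.range (leadPos B) := by
  refine Set.Subset.antisymm (fun M hM => ?_) (Set.range_subset_iff.2 fun n =>
    ⟨B n, ⟨mem_closedSpan B n, fun _ => apply_eq_zero_of_lt_leadPos⟩, ?_⟩)
  · have hdense : closedSpan B ≤ Submodule.span F (Set.range B) ⊔ tail F (M + 1) :=
      Submodule.topologicalClosure_minimal _ le_sup_left (isClosed_sup_tail _ _)
    obtain ⟨x, ⟨hx, hxM⟩, hM⟩ := mem_pivots_of_le_sup_tail hdense hM
    exact mem_range_leadPos_of_mem_span hB hx hxM hM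
  · rw [hB.2.2.1]
    exact one_ne_zero

theorem closedSpan_le_sup_tail (h : ∀ n, ∀ j < N, A n j = B n j) :
    closedSpan A ≤ closedSpan B ⊔ tail F N := by
  refine closedSpan_le (isClosed_sup_tail _ _) fun n => Submodule.mem_sup.2
    ⟨B n, mem_closedSpan B n, A n - B n, fun j hj => sub_eq_zero.2 (h n j hj), add_sub_cancel _ _⟩

namespace Minf

/-- The closed span of the columns of an echelon matrix. -/
def largeSubspace (B : Minf F) : LargeSubspace F :=
  ⟨closedSpan B.1, Submodule.isClosed_topologicalClosure _,
    pivots_closedSpan B.2 ▸ Set.infinite_range_of_injective B.2.2.1.injective⟩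

theorem enumLevels_largeSubspace (B : Minf F) :
    enumLevels 0 (largeSubspace B) = leadPos B.1 := by
  refine ((enumLevels_strictMono _ _).range_inj B.2.2.1).1 ?_
  rw [range_enumLevels, ← pivots_closedSpan B.2]
  exact Set.inter_eq_left.2 fun _ _ => Nat.zero_le _

theorem leadPos_eq_of_agree {A B : Minf F} (hAB : agree N (largeSubspace A) (largeSubspace B))
    (hn : leadPos B.1 n < N) : leadPos A.1 n = leadPos B.1 n := by
  rw [← enumLevels_largeSubspace] at hn
  rw [← enumLevels_largeSubspace, ← enumLevels_largeSubspace]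
  exact enumLevels_eq_of_agree (agree_of_le hn hAB)

theorem apply_eq_of_agree {A B : Minf F} (hAB : agree N (largeSubspace A) (largeSubspace B))
    (hj : j < N) : A.1 n j = B.1 n j := by
  by_cases hn : leadPos A.1 n < N
  · obtain ⟨u, hu, t, ht, hut⟩ := Submodule.mem_sup.1
      (hAB.le (Submodule.mem_sup_left (mem_closedSpan A.1 n)))
    have htail : u - B.1 n ∈ tail F N := by
      refine mem_tail_of_forall_pivots (N := 0)
        ⟨sub_mem hu (mem_closedSpan B.1 n), tail_zero.ge trivial⟩ fun M hM _ hMN => ?_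
      obtain ⟨m, rfl⟩ := (pivots_closedSpan B.2).le hM
      have hleft : u (leadPos B.1 m) = A.1 n (leadPos A.1 m) := by
        rw [leadPos_eq_of_agree hAB hMN, ← hut, Pi.add_apply, ht _ hMN, add_zero]
      rw [Pi.sub_apply, hleft, apply_leadPos A.2, apply_leadPos B.2, sub_self]
    rw [← hut, Pi.add_apply, ht j hj, add_zero]
    exact sub_eq_zero.1 (htail j hj)
  · have hn' : ¬ leadPos B.1 n < N := fun h => hn (leadPos_eq_of_agree hAB h ▸ h)
    rw [apply_eq_zero_of_lt_leadPos (hj.trans_le (not_lt.1 hn)),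
      apply_eq_zero_of_lt_leadPos (hj.trans_le (not_lt.1 hn'))]

theorem agree_iff {A B : Minf F} :
    agree N (largeSubspace A) (largeSubspace B) ↔ ∀ n, ∀ j < N, A.1 n j = B.1 n j := by
  refine ⟨fun hAB n j hj => apply_eq_of_agree hAB hj, fun h => le_antisymm ?_ ?_⟩
  · exact sup_le (closedSpan_le_sup_tail h) le_sup_right
  · exact sup_le (closedSpan_le_sup_tail fun n j hj => (h n j hj).symm) le_sup_right

theorem agree_zero (A B : Minf F) : agree 0 (largeSubspace A) (largeSubspace B) :=
  agree_iff.2 fun _ _ hj => absurd hj (Nat.not_lt_zero _)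

theorem largeSubspace_injective : Function.Injective (largeSubspace (F := F)) :=
  fun _ _ hAB => Subtype.ext <| funext fun _ => funext fun j =>
    apply_eq_of_agree (hAB ▸ agree_refl (j + 1) _) (Nat.lt_succ_self j)

variable [Finite F]

theorem largeSubspace_surjective : Function.Surjective (largeSubspace (F := F)) := by
  intro V
  have hq := enumLevels_strictMono 0 V
  choose B hBV _ hBq using fun n => exists_mem_comp_eq V.2.1 hq (enumLevels_mem 0 V)
    (zero_mem V.1) (Pi.single n 1)
  have hlead : leadPos B = enumLevels 0 V := funext fun n => by
    refine leadPos_eq ?_ ?_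
    · exact ne_of_eq_of_ne ((congrFun (hBq n) n).trans (Pi.single_eq_same n 1)) one_ne_zero
    · refine mem_tail_of_forall_pivots (N := 0) ⟨hBV n, tail_zero.ge trivial⟩ fun M hM _ hMn => ?_
      obtain ⟨i, rfl⟩ := (range_enumLevels 0 V).ge ⟨hM, Nat.zero_le M⟩
      exact (congrFun (hBq n) i).trans (Pi.single_eq_of_ne (hq.lt_iff_lt.1 hMn).ne 1)
  have hB : B ∈ Minf F := mem_Minf_of_comp_eq_single hq hBq hlead
  refine ⟨⟨B, hB⟩, Subtype.ext (eq_of_le_of_pivots_subset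
    (Submodule.isClosed_topologicalClosure _) (closedSpan_le V.2.1 hBV) fun M hM => ?_)⟩
  change M ∈ pivots (closedSpan B)
  rw [pivots_closedSpan hB, hlead, range_enumLevels]
  exact ⟨hM, Nat.zero_le M⟩

/-- Echelon matrices correspond to closed infinite-dimensional subspaces. -/
noncomputable def equivLargeSubspace : Minf F ≃ LargeSubspace F :=
  Equiv.ofBijective largeSubspace ⟨largeSubspace_injective, largeSubspace_surjective⟩

theorem isTruncationModel : IsTruncationModel (fun A B : ↥(Minf F) => Mle F A.1 B.1)
    (fun n (A : ↥(Minf F)) => rMat F n A.1) equivLargeSubspace where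
  le_iff _ _ := mle_iff_closedSpan_le
  exists_approx_iff n A := by
    obtain _ | _ | m := n
    · refine ⟨0, fun B => iff_of_true ⟨0, ?_⟩ (agree_zero _ _)⟩
      rw [rMat_zero, rMat_zero]
    · refine ⟨0, fun B => iff_of_true ⟨1, ?_⟩ (agree_zero _ _)⟩
      ext q
      simp [rMat]
    · exact ⟨_, fun B => (exists_rMat_eq_iff B.2 A.2 m.succ_pos).trans agree_iff.symm⟩
  exists_agree_of_approx N A :=
    ⟨N + 1 + 1, fun B hB => agree_iff.2 fun i j hj =>
      (exists_rMat_eq_iff B.2 A.2 N.succ_pos).1 hB i j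
      (hj.trans_le ((Nat.le_succ N).trans (A.2.2.1.le_apply.trans (Nat.le_succ _))))⟩

end Minf

end EchelonMatrices

end EchelonRamsey

/-- **Theorem (Carlson).** For every finite field `F`, `(M_∞(F), ≤, r)` is a
topological Ramsey space. -/
theorem minf_is_topological_ramsey_space (F : Type) [Field F] [Fintype F] :
    IsTopRamseySpace
      (fun A B : ↥(Minf F) => Mle F A.val B.val)
      (fun n (A : ↥(Minf F)) => rMat F n A.val) := by
  let _ : TopologicalSpace F := ⊥
  have : DiscreteTopology F := ⟨rfl⟩
  exact EchelonRamsey.Minf.isTruncationModel.isTopRamseySpace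
end
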